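/- arXiv:1609.03107 — 6 statements merged into one kernel-verified Lean document; each statement's English description precedes it below -/
import Mathlib

section
/- Let T > 0 and let h : [0,T] → ℝ be Lebesgue integrable. Define H(t) := ∫₀ᵗ h(s) ds for t ∈ [0,T]. Suppose that for every t ∈ [0,T]: if H(t) > 0 then h(t) ≤ 0, and if H(t) < 0 then h(t) ≥ 0. Then H(t) = 0 for every t ∈ [0,T]. -/
open MeasureTheory Set

/-!
If the primitive `H` of `h` were positive at `b`, let `s` be the last point of `[a, b]` with
`H s ≤ 0`, which exists by continuity. Then `H > 0` on `(s, b]`, so `h ≤ 0` almost everywhere there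
and `H b ≤ H s ≤ 0`, a contradiction. The lower bound follows by passing to `-h`.
-/

theorem exists_le_and_forall_Ioc_lt_of_continuousOn {α β : Type*}
    [LinearOrder α] [TopologicalSpace α] [OrderClosedTopology α] [CompactIccSpace α]
    [LinearOrder β] [TopologicalSpace β] [ClosedIicTopology β]
    {f : α → β} {a b : α} {c : β} (hab : a ≤ b) (hf : ContinuousOn f (Icc a b)) (ha : f a ≤ c) :
    ∃ s ∈ Icc a b, f s ≤ c ∧ ∀ x ∈ Ioc s b, c < f x := by
  have hclosed : IsClosed (Icc a b ∩ f ⁻¹' Iic c) :=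
    hf.preimage_isClosed_of_isClosed isClosed_Icc isClosed_Iic
  have hcompact : IsCompact (Icc a b ∩ f ⁻¹' Iic c) :=
    isCompact_Icc.of_isClosed_subset hclosed inter_subset_left
  obtain ⟨s, ⟨hs, hfs⟩, hlast⟩ := hcompact.exists_isGreatest ⟨a, left_mem_Icc.2 hab, ha⟩
  refine ⟨s, hs, hfs, fun x hx => lt_of_not_ge fun hfx => hx.1.not_ge ?_⟩
  exact hlast ⟨⟨hs.1.trans hx.1.le, hx.2⟩, hfx⟩

section Primitive

variable {μ : Measure ℝ} [NullSingletonClass μ] {h : ℝ → ℝ} {a b : ℝ}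

theorem intervalIntegral_nonpos_of_ae_nonpos_of_primitive_pos (hab : a ≤ b)
    (hint : IntegrableOn h (Icc a b) μ)
    (hsign : ∀ᵐ t ∂μ, t ∈ Ioc a b → 0 < ∫ s in a..t, h s ∂μ → h t ≤ 0) :
    ∫ s in a..b, h s ∂μ ≤ 0 := by
  have hcont : ContinuousOn (fun t => ∫ s in a..t, h s ∂μ) (Icc a b) := by
    rw [← uIcc_of_le hab] at hint ⊢
    exact intervalIntegral.continuousOn_primitive_interval hint
  obtain ⟨s, hs, hHs, hpos⟩ := exists_le_and_forall_Ioc_lt_of_continuousOn hab hcont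
    intervalIntegral.integral_same.le
  have hint_as : IntervalIntegrable h μ a s :=
    (hint.mono_set (uIcc_subset_Icc (left_mem_Icc.2 hab) hs)).intervalIntegrable
  have hint_sb : IntervalIntegrable h μ s b :=
    (hint.mono_set (uIcc_subset_Icc hs (right_mem_Icc.2 hab))).intervalIntegrable
  have htail : ∫ x in s..b, h x ∂μ ≤ 0 := by
    rw [intervalIntegral.integral_of_le hs.2]
    refine setIntegral_nonpos_ae measurableSet_Ioc ?_
    filter_upwards [hsign] with x hx hxs
    exact hx ⟨hs.1.trans_lt hxs.1, hxs.2⟩ (hpos x hxs)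
  calc ∫ x in a..b, h x ∂μ
      = (∫ x in a..s, h x ∂μ) + ∫ x in s..b, h x ∂μ :=
        (intervalIntegral.integral_add_adjacent_intervals hint_as hint_sb).symm
    _ ≤ 0 := add_nonpos hHs htail

theorem intervalIntegral_nonneg_of_ae_nonneg_of_primitive_neg (hab : a ≤ b)
    (hint : IntegrableOn h (Icc a b) μ)
    (hsign : ∀ᵐ t ∂μ, t ∈ Ioc a b → ∫ s in a..t, h s ∂μ < 0 → 0 ≤ h t) :
    0 ≤ ∫ s in a..b, h s ∂μ := by
  have hneg : ∫ s in a..b, -h s ∂μ ≤ 0 := by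
    refine intervalIntegral_nonpos_of_ae_nonpos_of_primitive_pos hab hint.neg ?_
    simpa only [intervalIntegral.integral_neg, neg_pos, Pi.neg_apply, neg_nonpos] using hsign
  rwa [intervalIntegral.integral_neg, neg_nonpos] at hneg

theorem stmt2_general (hint : IntegrableOn h (Icc a b) μ)
    (hsign : ∀ᵐ t ∂μ, t ∈ Ioc a b →
      (0 < ∫ s in a..t, h s ∂μ → h t ≤ 0) ∧ (∫ s in a..t, h s ∂μ < 0 → 0 ≤ h t)) :
    ∀ t ∈ Icc a b, ∫ s in a..t, h s ∂μ = 0 := by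
  intro t ht
  have hint_t : IntegrableOn h (Icc a t) μ := hint.mono_set (Icc_subset_Icc_right ht.2)
  have hsign_t : ∀ᵐ x ∂μ, x ∈ Ioc a t →
      (0 < ∫ s in a..x, h s ∂μ → h x ≤ 0) ∧ (∫ s in a..x, h s ∂μ < 0 → 0 ≤ h x) :=
    hsign.mono fun x hx hxt => hx (Ioc_subset_Ioc_right ht.2 hxt)
  apply le_antisymm
  · exact intervalIntegral_nonpos_of_ae_nonpos_of_primitive_pos ht.1 hint_t
      (hsign_t.mono fun x hx hxt => (hx hxt).1)
  · exact intervalIntegral_nonneg_of_ae_nonneg_of_primitive_neg ht.1 hint_t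
      (hsign_t.mono fun x hx hxt => (hx hxt).2)

end Primitive

/-- If `h` is integrable on `[0,T]`, `H t = ∫₀ᵗ h`, and for every `t ∈ [0,T]`
`H t > 0 → h t ≤ 0` and `H t < 0 → h t ≥ 0`, then `H ≡ 0` on `[0,T]`. -/
theorem stmt2 (T : ℝ) (hT : 0 < T) (h : ℝ → ℝ)
    (hint : IntegrableOn h (Icc 0 T))
    (hsign : ∀ t ∈ Icc (0 : ℝ) T,
      ((0 < ∫ s in (0 : ℝ)..t, h s) → h t ≤ 0) ∧
      ((∫ s in (0 : ℝ)..t, h s) < 0 → 0 ≤ h t)) :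
    ∀ t ∈ Icc (0 : ℝ) T, (∫ s in (0 : ℝ)..t, h s) = 0 :=
  stmt2_general hint (ae_of_all _ fun t ht => hsign t (Ioc_subset_Icc_self ht))
end

section
/- Let (m_n) and m be Borel probability measures on ℝ such that m_n converges weakly to m and m is absolutely continuous with respect to Lebesgue measure. Then for every δ > 0 and c > 0, sup_{j ∈ ℕ₀} m_n([jδ, jδ + c]) → sup_{j ∈ ℕ₀} m([jδ, jδ + c]) as n → ∞. -/
open MeasureTheory Set Filter Topology BoundedContinuousFunction

/-!
Weak convergence gives convergence on each interval, because the endpoints are null for the limit;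
hence the limiting supremum is at most the liminf of the suprema. Conversely, fix a level above the
limiting supremum: for large `x` the mass of `[x, ∞)` is below it for all late measures at once, so
only finitely many intervals remain, and each of these is eventually below it as well.
-/

section Supremum

variable {α β ι : Type*} [CompleteLinearOrder β] [TopologicalSpace β] [OrderTopology β]

theorem tendsto_iSup_of_eventually_prod_cofinite_lt [DenselyOrdered β]
    {l : Filter α} {f : α → ι → β} {g : ι → β}
    (hf : ∀ i, Tendsto (fun a => f a i) l (𝓝 (g i)))
    (htail : ∀ c, ⨆ i, g i < c → ∀ᶠ p in l ×ˢ cofinite, f p.1 p.2 < c) :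
    Tendsto (fun a => ⨆ i, f a i) l (𝓝 (⨆ i, g i)) := by
  refine tendsto_order.mpr ⟨fun b hb => ?_, fun b hb => ?_⟩
  · obtain ⟨i, hi⟩ := lt_iSup_iff.mp hb
    exact ((hf i).eventually_const_lt hi).mono fun a ha => ha.trans_le (le_iSup (f a) i)
  · obtain ⟨c, hgc, hcb⟩ := exists_between hb
    obtain ⟨late, hlate, far, hfar, hsmall⟩ := eventually_prod_iff.mp (htail c hgc)
    have hnear : ∀ᶠ a in l, ∀ i ∈ {i | ¬ far i}, f a i < c :=
      (eventually_all_finite hfar).mpr fun i _ =>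
        (hf i).eventually_lt_const ((le_iSup g i).trans_lt hgc)
    filter_upwards [hlate, hnear] with a ha hnear_a
    refine (iSup_le fun i => ?_).trans_lt hcb
    by_cases hi : far i
    · exact (hsmall ha hi).le
    · exact (hnear_a i hi).le

end Supremum

section WeakConvergence

variable {α ι X : Type*} {l : Filter α} [LinearOrder X] [TopologicalSpace X]
  [OrderClosedTopology X]

theorem frontier_Icc_subset (a b : X) : frontier (Icc a b) ⊆ {a, b} := by
  rw [isClosed_Icc.frontier_eq]
  rintro x ⟨⟨hax, hxb⟩, hx⟩
  by_contra! hne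
  simp only [mem_insert_iff, mem_singleton_iff, not_or] at hne
  exact hx (interior_maximal Ioo_subset_Icc_self isOpen_Ioo
    ⟨hax.lt_of_ne' hne.1, hxb.lt_of_ne hne.2⟩)

variable [MeasurableSpace X] [OpensMeasurableSpace X]

theorem tendsto_measure_Ici_atTop [(atTop : Filter X).IsCountablyGenerated]
    (μ : Measure X) [IsFiniteMeasure μ] [NullSingletonClass μ] :
    Tendsto (fun x => μ (Ici x)) atTop (𝓝 0) := by
  refine .of_neBot_imp fun h => ?_
  obtain ⟨x⟩ : Nonempty X := (atTop_neBot_iff.mp h).1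
  have hInter : (⋂ x : X, Ici x).Subsingleton := fun y hy z hz =>
    le_antisymm (mem_iInter.mp hz y) (mem_iInter.mp hy z)
  rw [← hInter.measure_zero μ]
  exact tendsto_measure_iInter_atTop (fun _ => measurableSet_Ici.nullMeasurableSet)
    antitone_Ici ⟨x, measure_ne_top μ _⟩

variable [HasOuterApproxClosed X] {μs : α → ProbabilityMeasure X} {μ : ProbabilityMeasure X}
  [NullSingletonClass (μ : Measure X)]

theorem tendsto_measure_Icc_of_tendsto (hμs : Tendsto μs l (𝓝 μ)) (a b : X) :
    Tendsto (fun n => (μs n : Measure X) (Icc a b)) l (𝓝 ((μ : Measure X) (Icc a b))) :=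
  ProbabilityMeasure.tendsto_measure_of_null_frontier_of_tendsto' hμs <|
    measure_mono_null (frontier_Icc_subset a b) ((toFinite {a, b}).measure_zero _)

variable [(atTop : Filter X).IsCountablyGenerated]

theorem tendsto_measure_Ici_prod_atTop_of_tendsto (hμs : Tendsto μs l (𝓝 μ)) :
    Tendsto (fun p : α × X => (μs p.1 : Measure X) (Ici p.2)) (l ×ˢ atTop) (𝓝 0) := by
  refine tendsto_order.mpr ⟨fun c hc => absurd hc not_lt_zero, fun c hc => ?_⟩
  have := μ.nonempty
  obtain ⟨x, hx⟩ := ((tendsto_measure_Ici_atTop (μ : Measure X)).eventually_lt_const hc).exists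
  have hlate : ∀ᶠ n in l, (μs n : Measure X) (Ici x) < c :=
    eventually_lt_of_limsup_lt <|
      (ProbabilityMeasure.limsup_measure_closed_le_of_tendsto hμs isClosed_Ici).trans_lt hx
  filter_upwards [hlate.prod_mk (eventually_ge_atTop x)] with p ⟨hp, hxp⟩
  exact (measure_mono (Ici_subset_Ici.mpr hxp)).trans_lt hp

theorem stmt4_general (hμs : Tendsto μs l (𝓝 μ)) {a b : ι → X} (ha : Tendsto a cofinite atTop) :
    Tendsto (fun n => ⨆ i, (μs n : Measure X) (Icc (a i) (b i))) l
      (𝓝 (⨆ i, (μ : Measure X) (Icc (a i) (b i)))) := by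
  refine tendsto_iSup_of_eventually_prod_cofinite_lt
    (fun i => tendsto_measure_Icc_of_tendsto hμs (a i) (b i)) fun c hc => ?_
  have htail : Tendsto (fun p : α × ι => (μs p.1 : Measure X) (Ici (a p.2)))
      (l ×ˢ cofinite) (𝓝 0) :=
    (tendsto_measure_Ici_prod_atTop_of_tendsto hμs).comp (tendsto_id.prodMap ha)
  exact (htail.eventually_lt_const (bot_le.trans_lt hc)).mono fun _ hp =>
    (measure_mono Icc_subset_Ici_self).trans_lt hp

end WeakConvergence

/-- if probability measures `m n` on `ℝ` converge weakly to `μ` and `μ` is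
absolutely continuous with respect to Lebesgue measure, then for all `δ, c > 0`,
`sup_j m n [jδ, jδ+c] → sup_j μ [jδ, jδ+c]`. -/
theorem stmt4 (m : ℕ → Measure ℝ) (μ : Measure ℝ)
    (hm : ∀ n, IsProbabilityMeasure (m n)) (hμ : IsProbabilityMeasure μ)
    (hweak : ∀ f : ℝ →ᵇ ℝ,
      Tendsto (fun n => ∫ x, f x ∂(m n)) atTop (𝓝 (∫ x, f x ∂μ)))
    (hac : μ ≪ volume) (δ c : ℝ) (hδ : 0 < δ) (hc : 0 < c) :
    Tendsto (fun n => ⨆ j : ℕ, m n (Icc ((j : ℝ) * δ) ((j : ℝ) * δ + c)))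
      atTop (𝓝 (⨆ j : ℕ, μ (Icc ((j : ℝ) * δ) ((j : ℝ) * δ + c)))) := by
  let P : ProbabilityMeasure ℝ := ⟨μ, hμ⟩
  have : NullSingletonClass (P : Measure ℝ) := ⟨fun _ => hac (measure_singleton _)⟩
  exact stmt4_general (μ := P) (μs := fun n => ⟨m n, hm n⟩)
    (ProbabilityMeasure.tendsto_iff_forall_integral_tendsto.mpr hweak)
    (Nat.cofinite_eq_atTop ▸ tendsto_natCast_atTop_atTop.atTop_mul_const hδ)
end

section
/- Let T > 0, d ∈ ℕ, and let ζ : ℝ^d → [0,∞) be continuous and satisfy the subquadratic growth condition. Let (π_n) be a sequence of measurable maps from [0,T] to M(ℝ^d) and π a measurable map from [0,T] to M(ℝ^d) such that: (a) sup_n ∫₀^T ∫_{ℝ^d} ‖x‖² dπ_n(s)(x) ds < ∞; and (b) for every s ∈ [0,T], π_n(s) converges weakly to π(s). Then for every t ∈ [0,T], ∫₀ᵗ ⟨ζ, π_n(s)⟩ ds → ∫₀ᵗ ⟨ζ, π(s)⟩ ds as n → ∞. -/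
open MeasureTheory Set BoundedContinuousFunction Filter Topology ENNReal NNReal

open ProbabilityTheory

/-!
Averaging the kernels over time turns the claim into one about a weakly convergent family of finite
measures: tested against a bounded continuous function, the time averages converge by dominated
convergence. By Fatou's lemma the bound on the integrals of `V = ‖·‖²` passes to the limit measure.
Cutting `ζ` off at height `K` costs at most `ε V` pointwise, hence at most `ε C` after integration,
uniformly along the family and for the limit.
-/

variable {S X ι : Type*} {l : Filter ι}

/-- `f` is infinitesimally bounded relative to the weight `V`: up to an additive constant it is
dominated by arbitrarily small multiples of `V`. For `V` a power of the norm this is the growth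
condition under which a bound on `∫ V` makes `f` uniformly integrable. -/
def IsInfinitesimallyBounded (f : X → ℝ) (V : X → ℝ≥0) : Prop :=
  ∀ ε > 0, ∃ K : ℝ≥0, ∀ x, |f x| ≤ K + ε * V x

lemma exists_forall_mul_one_add_rpow_le {p q : ℝ} (hp : 0 ≤ p) (hpq : p < q) (C : ℝ) {ε : ℝ}
    (hε : 0 < ε) : ∃ K : ℝ≥0, ∀ r : ℝ, 0 ≤ r → C * (1 + r ^ p) ≤ K + ε * r ^ q := by
  have hlarge : ∀ᶠ r : ℝ in atTop, |C| ≤ ε * r ^ (q - p) :=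
    ((_root_.tendsto_rpow_atTop (sub_pos.2 hpq)).const_mul_atTop hε).eventually_ge_atTop _
  obtain ⟨R, hR⟩ := eventually_atTop.1 (hlarge.and (eventually_gt_atTop 0))
  have hR0 : 0 < R := (hR R le_rfl).2
  refine ⟨⟨|C| * (1 + R ^ p), by positivity⟩, fun r hr ↦ ?_⟩
  have hC : C * (1 + r ^ p) ≤ |C| * (1 + r ^ p) := by gcongr; exact le_abs_self C
  refine hC.trans ?_
  rcases le_total r R with hrR | hRr
  · calc |C| * (1 + r ^ p) ≤ |C| * (1 + R ^ p) := by gcongr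
      _ ≤ |C| * (1 + R ^ p) + ε * r ^ q := le_add_of_nonneg_right (by positivity)
  · have hpow : |C| * r ^ p ≤ ε * r ^ q :=
      calc |C| * r ^ p ≤ ε * r ^ (q - p) * r ^ p := by gcongr; exact (hR r hRr).1
        _ = ε * r ^ q := by rw [mul_assoc, ← Real.rpow_add (hR r hRr).2, sub_add_cancel]
    calc |C| * (1 + r ^ p) = |C| + |C| * r ^ p := by ring
      _ ≤ |C| * (1 + R ^ p) + ε * r ^ q := by
        gcongr
        exact le_mul_of_one_le_right (abs_nonneg C) (le_add_of_nonneg_right (by positivity))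

lemma isInfinitesimallyBounded_nnnorm_rpow {E : Type*} [SeminormedAddCommGroup E] {f : E → ℝ}
    {C p q : ℝ} (hp : 0 ≤ p) (hpq : p < q) (hf : ∀ x, |f x| ≤ C * (1 + ‖x‖ ^ p)) :
    IsInfinitesimallyBounded f (fun x ↦ ‖x‖₊ ^ q) := fun ε hε ↦ by
  obtain ⟨K, hK⟩ := exists_forall_mul_one_add_rpow_le hp hpq C hε
  exact ⟨K, fun x ↦ by simpa using (hf x).trans (hK ‖x‖ (norm_nonneg x))⟩

section Truncation

variable [TopologicalSpace X] {f : X → ℝ}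

/-- The truncation of a continuous function to values in `[-K, K]`, used as a test function for
weak convergence. -/
def truncate (hf : Continuous f) (K : ℝ≥0) : X →ᵇ ℝ :=
  .ofNormedAddCommGroup (fun x ↦ max (-(K : ℝ)) (min (f x) K)) (by fun_prop) K fun _ ↦
    abs_le.2 ⟨le_max_left _ _, max_le (neg_le_self K.2) (min_le_right _ _)⟩

lemma abs_sub_truncate_le (hf : Continuous f) {K : ℝ≥0} {b : ℝ} (hb : 0 ≤ b) {x : X}
    (hx : |f x| ≤ K + b) : |f x - truncate hf K x| ≤ b := by
  change |f x - max (-(K : ℝ)) (min (f x) K)| ≤ b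
  grind

end Truncation

section WeakConvergence

variable [MeasurableSpace X] {f : X → ℝ} {V : X → ℝ≥0}

lemma integrable_coe_of_lintegral_le {μ : Measure X} (hV : AEMeasurable V μ) {C : ℝ≥0}
    (hC : ∫⁻ x, V x ∂μ ≤ C) : Integrable (fun x ↦ (V x : ℝ)) μ :=
  integrable_toReal_of_lintegral_ne_top hV.coe_nnreal_ennreal (hC.trans_lt coe_lt_top).ne

lemma integrable_of_abs_le_const_add_mul {μ : Measure X} [IsFiniteMeasure μ]
    (hf : AEStronglyMeasurable f μ) (hV : AEMeasurable V μ) {C : ℝ≥0} (hC : ∫⁻ x, V x ∂μ ≤ C)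
    {K ε : ℝ} (hK : ∀ x, |f x| ≤ K + ε * V x) : Integrable f μ :=
  ((integrable_const K).add ((integrable_coe_of_lintegral_le hV hC).const_mul ε)).mono' hf
    (ae_of_all _ hK)

lemma IsInfinitesimallyBounded.integrable {μ : Measure X} [IsFiniteMeasure μ]
    (hfV : IsInfinitesimallyBounded f V) (hf : AEStronglyMeasurable f μ) (hV : AEMeasurable V μ)
    {C : ℝ≥0} (hC : ∫⁻ x, V x ∂μ ≤ C) : Integrable f μ :=
  let ⟨_, hK⟩ := hfV 1 one_pos
  integrable_of_abs_le_const_add_mul hf hV hC hK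

variable [TopologicalSpace X] [OpensMeasurableSpace X]

lemma abs_integral_sub_integral_truncate_le {μ : Measure X} [IsFiniteMeasure μ]
    (hf : Continuous f) (hV : AEMeasurable V μ) {C : ℝ≥0} (hC : ∫⁻ x, V x ∂μ ≤ C)
    {ε : ℝ} (hε : 0 ≤ ε) {K : ℝ≥0} (hK : ∀ x, |f x| ≤ K + ε * V x) :
    |∫ x, f x ∂μ - ∫ x, truncate hf K x ∂μ| ≤ ε * C := by
  have hfμ : Integrable f μ := integrable_of_abs_le_const_add_mul (by fun_prop) hV hC hK
  rw [← integral_sub hfμ ((truncate hf K).integrable μ)]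
  calc ‖∫ x, (f x - truncate hf K x) ∂μ‖
    _ ≤ ∫ x, ε * V x ∂μ :=
      norm_integral_le_of_norm_le ((integrable_coe_of_lintegral_le hV hC).const_mul ε)
        (ae_of_all _ fun x ↦ abs_sub_truncate_le hf (by positivity) (hK x))
    _ = ε * ∫ x, (V x : ℝ) ∂μ := integral_const_mul _ _
    _ ≤ ε * C := by gcongr; exact integral_coe_le_of_lintegral_coe_le hC

variable {M : ι → FiniteMeasure X} {M' : FiniteMeasure X}

lemma lintegral_le_of_tendsto_finiteMeasure [l.NeBot] (hM : Tendsto M l (𝓝 M'))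
    (hV : Continuous V) {C : ℝ≥0∞} (hC : ∀ᶠ i in l, ∫⁻ x, V x ∂(M i) ≤ C) :
    ∫⁻ x, V x ∂M' ≤ C := by
  let W (n : ℕ) : X →ᵇ ℝ≥0 := .mkOfBound ⟨fun x ↦ min (V x) n, by fun_prop⟩ n fun x y ↦ by
    rw [NNReal.dist_eq]
    exact abs_sub_le_of_nonneg_of_le (min (V x) n).2 (min_le_right (V x) _)
      (min (V y) n).2 (min_le_right (V y) _)
  have hWC (n : ℕ) : ∫⁻ x, W n x ∂M' ≤ C := by
    refine le_of_tendsto (FiniteMeasure.tendsto_iff_forall_lintegral_tendsto.1 hM (W n)) ?_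
    filter_upwards [hC] with i hi
    exact (lintegral_mono fun x ↦ coe_le_coe.2 (min_le_left _ _)).trans hi
  have hWV (x : X) : Tendsto (fun n ↦ (W n x : ℝ≥0∞)) atTop (𝓝 (V x)) := by
    obtain ⟨N, hN⟩ := exists_nat_ge (V x)
    refine tendsto_atTop_of_eventually_const (i₀ := N) fun n hn ↦ ?_
    exact congrArg _ (min_eq_left (hN.trans (Nat.cast_le.2 hn)))
  have hWmono (x : X) : Monotone fun n ↦ (W n x : ℝ≥0∞) := fun m n hmn ↦
    coe_le_coe.2 (min_le_min_left _ (Nat.cast_le.2 hmn))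
  exact le_of_tendsto' (lintegral_tendsto_of_tendsto_of_monotone (fun n ↦ by fun_prop)
    (ae_of_all _ hWmono) (ae_of_all _ hWV)) hWC

lemma IsInfinitesimallyBounded.tendsto_integral (hfV : IsInfinitesimallyBounded f V)
    (hf : Continuous f) (hV : Continuous V) (hM : Tendsto M l (𝓝 M')) {C : ℝ≥0}
    (hC : ∀ᶠ i in l, ∫⁻ x, V x ∂(M i) ≤ C) :
    Tendsto (fun i ↦ ∫ x, f x ∂(M i)) l (𝓝 (∫ x, f x ∂M')) := by
  rcases l.eq_or_neBot with rfl | _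
  · exact tendsto_bot
  have hC' := lintegral_le_of_tendsto_finiteMeasure hM hV hC
  rw [Metric.tendsto_nhds]
  intro δ hδ
  set ε := δ / (3 * (C + 1)) with hε_def
  have hε : 0 < ε := by positivity
  have hεC : ε * C < δ / 3 := by
    have : ε * (C + 1) = δ / 3 := by rw [hε_def]; field_simp
    linarith
  obtain ⟨K, hK⟩ := hfV ε hε
  have hclose (m : FiniteMeasure X) (hm : ∫⁻ x, V x ∂m ≤ C) :
      |∫ x, f x ∂m - ∫ x, truncate hf K x ∂m| < δ / 3 :=
    (abs_integral_sub_integral_truncate_le hf (by fun_prop) hm hε.le hK).trans_lt hεC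
  have htrunc := FiniteMeasure.tendsto_iff_forall_integral_tendsto.1 hM (truncate hf K)
  filter_upwards [hC, Metric.tendsto_nhds.1 htrunc (δ / 3) (by positivity)] with i hi hclose_i
  rw [Real.dist_eq] at hclose_i ⊢
  have h₁ := hclose (M i) hi
  have h₂ := hclose M' hC'
  grind

end WeakConvergence

section Mixture

variable [MeasurableSpace S] [MeasurableSpace X] {μ : Measure S} [IsFiniteMeasure μ]

/-- The average over `μ` of the measures of a finite kernel, bundled as a finite measure so that
its weak convergence can be expressed. -/
noncomputable def mixture (μ : Measure S) [IsFiniteMeasure μ] (κ : Kernel S X)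
    [IsFiniteKernel κ] : FiniteMeasure X :=
  ⟨κ ∘ₘ μ, inferInstance⟩

lemma lintegral_mixture {κ : Kernel S X} [IsFiniteKernel κ] {g : X → ℝ≥0∞} (hg : Measurable g) :
    ∫⁻ x, g x ∂(mixture μ κ) = ∫⁻ s, ∫⁻ x, g x ∂(κ s) ∂μ :=
  Measure.lintegral_bind κ.aemeasurable hg.aemeasurable

lemma integral_mixture {κ : Kernel S X} [IsFiniteKernel κ] {f : X → ℝ}
    (hf : Integrable f (mixture μ κ)) :
    ∫ x, f x ∂(mixture μ κ) = ∫ s, ∫ x, f x ∂(κ s) ∂μ := by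
  have hconst : (mixture μ κ : Measure X) = (κ ∘ₖ Kernel.const Unit μ) () :=
    Measure.comp_eq_comp_const_apply
  rw [hconst] at hf ⊢
  rw [Kernel.integral_comp hf, Kernel.const_apply]

variable [TopologicalSpace X] [OpensMeasurableSpace X] {κ : ι → Kernel S X} {κ' : Kernel S X}

lemma tendsto_mixture [l.IsCountablyGenerated] [∀ i, IsFiniteKernel (κ i)] [IsFiniteKernel κ']
    {c : ℝ≥0} (hκ : ∀ᶠ i in l, ∀ᵐ s ∂μ, κ i s univ ≤ c)
    (hweak : ∀ᵐ s ∂μ, ∀ g : X →ᵇ ℝ, Tendsto (fun i ↦ ∫ x, g x ∂(κ i s)) l (𝓝 (∫ x, g x ∂(κ' s)))) :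
    Tendsto (fun i ↦ mixture μ (κ i)) l (𝓝 (mixture μ κ')) := by
  rw [FiniteMeasure.tendsto_iff_forall_integral_tendsto]
  intro g
  simp only [integral_mixture (g.integrable _)]
  refine tendsto_integral_filter_of_dominated_convergence (fun _ ↦ c * ‖g‖) ?_ ?_
    (integrable_const _) (hweak.mono fun s hs ↦ hs g)
  · exact .of_forall fun i ↦
      (StronglyMeasurable.integral_kernel g.continuous.measurable.stronglyMeasurable
        ).aestronglyMeasurable
  · filter_upwards [hκ] with i hi
    filter_upwards [hi] with s hs
    refine (g.norm_integral_le_mul_norm _).trans ?_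
    gcongr
    exact toReal_le_coe_of_le_coe hs

theorem stmt6_general [l.IsCountablyGenerated] {f : X → ℝ} {V : X → ℝ≥0} (hf : Continuous f)
    (hV : Continuous V) (hfV : IsInfinitesimallyBounded f V) {c c' C : ℝ≥0}
    (hκ : ∀ i s, κ i s univ ≤ c) (hκ' : ∀ s, κ' s univ ≤ c')
    (hC : ∀ᶠ i in l, ∫⁻ s, ∫⁻ x, V x ∂(κ i s) ∂μ ≤ C)
    (hweak : ∀ᵐ s ∂μ, ∀ g : X →ᵇ ℝ, Tendsto (fun i ↦ ∫ x, g x ∂(κ i s)) l (𝓝 (∫ x, g x ∂(κ' s)))) :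
    Tendsto (fun i ↦ ∫ s, ∫ x, f x ∂(κ i s) ∂μ) l (𝓝 (∫ s, ∫ x, f x ∂(κ' s) ∂μ)) := by
  rcases l.eq_or_neBot with rfl | _
  · exact tendsto_bot
  have (i : ι) : IsFiniteKernel (κ i) := ⟨c, coe_lt_top, hκ i⟩
  have : IsFiniteKernel κ' := ⟨c', coe_lt_top, hκ'⟩
  have hmix : Tendsto (fun i ↦ mixture μ (κ i)) l (𝓝 (mixture μ κ')) :=
    tendsto_mixture (.of_forall fun i ↦ ae_of_all _ (hκ i)) hweak
  have hC_mix : ∀ᶠ i in l, ∫⁻ x, V x ∂(mixture μ (κ i)) ≤ C :=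
    hC.mono fun i hi ↦ (lintegral_mixture (by fun_prop)).trans_le hi
  have hC_mix' : ∫⁻ x, V x ∂(mixture μ κ') ≤ C :=
    lintegral_le_of_tendsto_finiteMeasure hmix hV hC_mix
  rw [← integral_mixture (hfV.integrable (by fun_prop) (by fun_prop) hC_mix')]
  refine (hfV.tendsto_integral hf hV hmix hC_mix).congr' ?_
  filter_upwards [hC_mix] with i hi
  exact integral_mixture (hfV.integrable (by fun_prop) (by fun_prop) hi)

end Mixture

/-- if sub-probability measure valued maps `π n` on `[0,T]` have uniformly
bounded integrated second moments and `π n s → π s` weakly for every `s ∈ [0,T]`, then for a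
continuous `ζ ≥ 0` of subquadratic growth, `∫₀ᵗ ⟨ζ, π n (s)⟩ ds → ∫₀ᵗ ⟨ζ, π(s)⟩ ds` for every
`t ∈ [0,T]`. -/
theorem stmt6 (T : ℝ) (hT : 0 < T) (d : ℕ)
    (ζ : EuclideanSpace ℝ (Fin d) → ℝ) (hζc : Continuous ζ) (hζ0 : ∀ x, 0 ≤ ζ x)
    (Cζ p : ℝ) (hC : 0 < Cζ) (hp0 : 0 ≤ p) (hp2 : p < 2)
    (hgrowth : ∀ x, ζ x ≤ Cζ * (1 + ‖x‖ ^ p))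
    (π : ℕ → ℝ → Measure (EuclideanSpace ℝ (Fin d)))
    (πlim : ℝ → Measure (EuclideanSpace ℝ (Fin d)))
    (hmeas : ∀ n, Measurable (π n)) (hmeaslim : Measurable πlim)
    (hsub : ∀ n s, π n s univ ≤ 1) (hsublim : ∀ s, πlim s univ ≤ 1)
    (C : ℝ≥0∞) (hC' : C ≠ ⊤)
    (hmom : ∀ n, (∫⁻ s in Icc (0 : ℝ) T,
        ∫⁻ x, (‖x‖₊ : ℝ≥0∞) ^ 2 ∂(π n s) ∂volume) ≤ C)
    (hweak : ∀ s ∈ Icc (0 : ℝ) T, ∀ f : EuclideanSpace ℝ (Fin d) →ᵇ ℝ,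
      Tendsto (fun n => ∫ x, f x ∂(π n s)) atTop (𝓝 (∫ x, f x ∂(πlim s)))) :
    ∀ t ∈ Icc (0 : ℝ) T,
      Tendsto (fun n => ∫ s in (0 : ℝ)..t, ∫ x, ζ x ∂(π n s)) atTop
        (𝓝 (∫ s in (0 : ℝ)..t, ∫ x, ζ x ∂(πlim s))) := by
  intro t ht
  lift C to ℝ≥0 using hC'
  have htT : Ioc 0 t ⊆ Icc 0 T := Ioc_subset_Icc_self.trans (Icc_subset_Icc_right ht.2)
  have hζabs (x) : |ζ x| ≤ Cζ * (1 + ‖x‖ ^ p) := (abs_of_nonneg (hζ0 x)).trans_le (hgrowth x)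
  have hζ : IsInfinitesimallyBounded ζ (fun x ↦ ‖x‖₊ ^ 2) := by
    simpa using isInfinitesimallyBounded_nnnorm_rpow hp0 hp2 hζabs
  simp only [intervalIntegral.integral_of_le ht.1]
  exact stmt6_general (κ := fun n ↦ ⟨π n, hmeas n⟩) (κ' := ⟨πlim, hmeaslim⟩) (c := 1) (c' := 1)
    hζc (by fun_prop) hζ hsub hsublim
    (.of_forall fun n ↦ (lintegral_mono_set htT).trans (by simpa using hmom n))
    (ae_restrict_of_forall_mem measurableSet_Ioc fun s hs ↦ hweak s (htT hs))
end

section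
/- Let T > 0, d, n ∈ ℕ, let ζ : ℝ^d → [0,∞) be continuous, let w₁,…,w_n ∈ C([0,T];ℝ^d), and let x₁,…,x_n be pairwise distinct strictly positive real numbers. Then there exists a unique map μ : [0,T] → (finite Borel measures on ℝ^d) such that s ↦ ⟨ζ, μ(s)⟩ is measurable and locally integrable and, for every t ∈ [0,T], μ(t) = (1/n) Σ_{i=1}^n δ_{w_i(t)} · 1{ x_i > ∫₀ᵗ ⟨ζ, μ(s)⟩ ds }. -/
open MeasureTheory Set ENNReal

/-!
Let `A t = ∫₀ᵗ ⟨ζ, μ s⟩ ds` be the cumulative hazard. Since `μ t` is determined by `A t`, the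
measure equation is equivalent to the scalar equation `A' = ∑ᵢ 1{A < xᵢ} aᵢ`, where `aᵢ` is the
hazard of particle `i` along its path. The right-hand side is antitone in `A`, so two solutions
cannot separate: while `B < A`, the difference `A - B` does not increase. For existence, run the
equation with every particle alive until `A` reaches the lowest threshold, and from then on solve
the equation of the remaining particles; as `A` is monotone, the removed particle never returns.
-/

lemma integral_nonpos_of_forall_pos_imp_nonpos {h : ℝ → ℝ} {a b : ℝ} (hab : a ≤ b)
    (hh : IntegrableOn h (Icc a b)) (H : ∀ s ∈ Ioo a b, (0 < ∫ u in a..s, h u) → h s ≤ 0) :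
    ∫ u in a..b, h u ≤ 0 := by
  have hcont : ContinuousOn (fun s => ∫ u in a..s, h u) (Icc a b) := by
    rw [← uIcc_of_le hab] at hh ⊢
    exact intervalIntegral.continuousOn_primitive_interval hh
  have hcompact : IsCompact {s ∈ Icc a b | ∫ u in a..s, h u ≤ 0} :=
    isCompact_Icc.of_isClosed_subset (isClosed_Icc.isClosed_le hcont continuousOn_const)
      (sep_subset _ _)
  obtain ⟨σ, ⟨hσ, hσ_nonpos⟩, hσ_max⟩ := hcompact.exists_isGreatest ⟨a, by simp [hab]⟩
  have h_int {p q : ℝ} (hpq : p ≤ q) (hsub : Icc p q ⊆ Icc a b) : IntervalIntegrable h volume p q :=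
    (intervalIntegrable_iff_integrableOn_Icc_of_le hpq).2 (hh.mono_set hsub)
  have h_int_left := h_int hσ.1 (Icc_subset_Icc_right hσ.2)
  have h_int_right := h_int hσ.2 (Icc_subset_Icc_left hσ.1)
  have h_nonpos (s) (hs : s ∈ Ioo σ b) : h s ≤ 0 :=
    have hs' : s ∈ Ioo a b := ⟨hσ.1.trans_lt hs.1, hs.2⟩
    H s hs' (lt_of_not_ge fun hle => hs.1.not_ge (hσ_max ⟨Ioo_subset_Icc_self hs', hle⟩))
  calc ∫ u in a..b, h u
      = (∫ u in a..σ, h u) + ∫ u in σ..b, h u :=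
        (intervalIntegral.integral_add_adjacent_intervals h_int_left h_int_right).symm
    _ ≤ 0 + ∫ _ in σ..b, (0 : ℝ) :=
        add_le_add hσ_nonpos (intervalIntegral.integral_mono_on_of_le_Ioo hσ.2 h_int_right
          intervalIntegrable_const h_nonpos)
    _ = 0 := by simp

/-- Integral (Carathéodory) form of the Cauchy problem `A' = f(t, A)`, `A(t₀) = c` on the set `I`.
Integrability of `u ↦ f u (A u)` is not part of the notion: where it fails, the integral is `0`. -/
def IsIntegralSolution (f : ℝ → ℝ → ℝ) (t₀ c : ℝ) (A : ℝ → ℝ) (I : Set ℝ) : Prop :=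
  ∀ t ∈ I, A t = c + ∫ u in t₀..t, f u (A u)

namespace IsIntegralSolution

variable {f g : ℝ → ℝ → ℝ} {t₀ c : ℝ} {A B : ℝ → ℝ}

lemma mono {I J : Set ℝ} (hA : IsIntegralSolution f t₀ c A J) (hIJ : I ⊆ J) :
    IsIntegralSolution f t₀ c A I :=
  fun t ht => hA t (hIJ ht)

lemma congr {I : Set ℝ} (hA : IsIntegralSolution f t₀ c A I) (hI : I ⊆ Ici t₀) (hBA : EqOn B A I)
    (hgf : ∀ t ∈ I, ∀ u ∈ Ioo t₀ t, g u (B u) = f u (A u)) :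
    IsIntegralSolution g t₀ c B I := by
  intro t ht
  rw [hBA ht, hA t ht, intervalIntegral.integral_congr_Ioo_of_le (hI ht) (hgf t ht)]

lemma piecewise {τ : ℝ} {F G : ℝ → ℝ} (hF : IsIntegralSolution f t₀ c F (Icc t₀ τ))
    (hG : IsIntegralSolution f τ (F τ) G (Ici τ)) (hτ : t₀ ≤ τ)
    (h_int : ∀ p q, IntervalIntegrable (fun u => f u ((Iic τ).piecewise F G u)) volume p q) :
    IsIntegralSolution f t₀ c ((Iic τ).piecewise F G) (Ici t₀) := by
  set A : ℝ → ℝ := (Iic τ).piecewise F G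
  have hAF : EqOn A F (Iic τ) := piecewise_eqOn _ F G
  have hAG : EqOn A G (Ici τ) := by
    intro t ht
    rcases (mem_Ici.1 ht).eq_or_lt with rfl | hτt
    · rw [hAF self_mem_Iic, hG τ self_mem_Ici, intervalIntegral.integral_same, add_zero]
    · exact piecewise_eq_of_notMem _ F G hτt.not_ge
  have hA_left : IsIntegralSolution f t₀ c A (Icc t₀ τ) :=
    hF.congr Icc_subset_Ici_self (hAF.mono Icc_subset_Iic_self) fun t ht u hu => by
      rw [hAF (hu.2.le.trans ht.2)]
  have hA_right : IsIntegralSolution f τ (F τ) A (Ici τ) :=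
    hG.congr Subset.rfl hAG fun t _ u hu => by rw [hAG hu.1.le]
  intro t ht
  rcases le_total t τ with htτ | hτt
  · exact hA_left t ⟨ht, htτ⟩
  · rw [hA_right t hτt, ← hAF self_mem_Iic, hA_left τ ⟨hτ, le_rfl⟩, add_assoc,
      intervalIntegral.integral_add_adjacent_intervals (h_int t₀ τ) (h_int τ t)]

lemma le_of_nonneg {t : ℝ} (hA : IsIntegralSolution f t₀ c A (Ici t₀)) (hf : ∀ u r, 0 ≤ f u r)
    (ht : t₀ ≤ t) : c ≤ A t := by
  rw [hA t ht]
  exact le_add_of_nonneg_right (intervalIntegral.integral_nonneg ht fun u _ => hf u (A u))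

lemma le_of_antitone {T : ℝ} (hf : ∀ u, Antitone (f u))
    (hA : IsIntegralSolution f t₀ c A (Icc t₀ T)) (hB : IsIntegralSolution f t₀ c B (Icc t₀ T))
    (hA_int : IntegrableOn (fun u => f u (A u)) (Icc t₀ T))
    (hB_int : IntegrableOn (fun u => f u (B u)) (Icc t₀ T)) :
    ∀ t ∈ Icc t₀ T, A t ≤ B t := by
  have hsub (t) (ht : t ∈ Icc t₀ T) :
      A t - B t = ∫ u in t₀..t, (f u (A u) - f u (B u)) := by
    have h_int {D : ℝ → ℝ} (hD : IntegrableOn D (Icc t₀ T)) : IntervalIntegrable D volume t₀ t :=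
      (intervalIntegrable_iff_integrableOn_Icc_of_le ht.1).2
        (hD.mono_set (Icc_subset_Icc_right ht.2))
    rw [intervalIntegral.integral_sub (h_int hA_int) (h_int hB_int), hA t ht, hB t ht]
    ring
  intro t ht
  rw [← sub_nonpos, hsub t ht]
  refine integral_nonpos_of_forall_pos_imp_nonpos ht.1
    ((hA_int.sub hB_int).mono_set (Icc_subset_Icc_right ht.2)) fun s hs hpos => ?_
  rw [← hsub s ⟨hs.1.le, hs.2.le.trans ht.2⟩, sub_pos] at hpos
  exact sub_nonpos.2 (hf s hpos.le)

lemma eqOn_of_antitone {T : ℝ} (hf : ∀ u, Antitone (f u))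
    (hA : IsIntegralSolution f t₀ c A (Icc t₀ T)) (hB : IsIntegralSolution f t₀ c B (Icc t₀ T))
    (hA_int : IntegrableOn (fun u => f u (A u)) (Icc t₀ T))
    (hB_int : IntegrableOn (fun u => f u (B u)) (Icc t₀ T)) :
    EqOn A B (Icc t₀ T) :=
  fun t ht => le_antisymm (le_of_antitone hf hA hB hA_int hB_int t ht)
    (le_of_antitone hf hB hA hB_int hA_int t ht)

end IsIntegralSolution

section SurvivingRate

variable {ι : Type*} {x : ι → ℝ} {a : ι → ℝ → ℝ} {S : Finset ι}

/-- Total hazard at time `s` of those particles of `S` that survive a cumulative hazard `r`: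
particle `i` has hazard `a i` and dies once the cumulative hazard reaches its threshold `x i`. -/
noncomputable def survivingRate (x : ι → ℝ) (a : ι → ℝ → ℝ) (S : Finset ι) (s r : ℝ) : ℝ :=
  ∑ i ∈ S, if r < x i then a i s else 0

lemma survivingRate_nonneg (ha : ∀ i s, 0 ≤ a i s) (s r : ℝ) : 0 ≤ survivingRate x a S s r :=
  Finset.sum_nonneg fun i _ => by split_ifs; exacts [ha i s, le_rfl]

lemma survivingRate_antitone (ha : ∀ i s, 0 ≤ a i s) (s : ℝ) :
    Antitone (survivingRate x a S s) := by
  intro r r' hr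
  refine Finset.sum_le_sum fun i _ => ?_
  have := ha i s
  split_ifs <;> linarith

lemma survivingRate_of_forall_lt {r : ℝ} (hr : ∀ i ∈ S, r < x i) (s : ℝ) :
    survivingRate x a S s r = ∑ i ∈ S, a i s :=
  Finset.sum_congr rfl fun i hi => if_pos (hr i hi)

lemma survivingRate_insert_of_le [DecidableEq ι] {j : ι} {r : ℝ} (hr : x j ≤ r) (s : ℝ) :
    survivingRate x a (insert j S) s r = survivingRate x a S s r :=
  Finset.sum_insert_zero (if_neg hr.not_gt)

lemma integrable_survivingRate (ha : ∀ i, Integrable (a i)) {A : ℝ → ℝ} (hA : Measurable A) :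
    Integrable fun s => survivingRate x a S s (A s) :=
  integrable_finsetSum _ fun i _ =>
    (ha i).indicator (measurableSet_lt hA measurable_const)

lemma exists_isIntegralSolution_survivingRate_insert [DecidableEq ι]
    (ha : ∀ i, Integrable (a i)) (ha0 : ∀ i s, 0 ≤ a i s) {j : ι} (hj : ∀ i ∈ S, x j ≤ x i)
    (ih : ∀ t₀ c, ∃ A : ℝ → ℝ, Measurable A ∧
      IsIntegralSolution (survivingRate x a S) t₀ c A (Ici t₀)) (t₀ c : ℝ) :
    ∃ A : ℝ → ℝ, Measurable A ∧
      IsIntegralSolution (survivingRate x a (insert j S)) t₀ c A (Ici t₀) := by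
  set g : ℝ → ℝ := fun s => ∑ i ∈ insert j S, a i s
  set F : ℝ → ℝ := fun t => c + ∫ s in t₀..t, g s
  have hF_cont : Continuous F :=
    continuous_const.add ((integrable_finsetSum _ fun i _ => ha i).continuous_primitive t₀)
  have hF : IsIntegralSolution (fun s _ => g s) t₀ c F (Ici t₀) := fun _ _ => rfl
  have hrate {r : ℝ} (hr : r < x j) (s : ℝ) : survivingRate x a (insert j S) s r = g s :=
    survivingRate_of_forall_lt
      (Finset.forall_mem_insert _ _ _ |>.2 ⟨hr, fun i hi => hr.trans_le (hj i hi)⟩) s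
  by_cases hhit : {t | t₀ ≤ t ∧ x j ≤ F t}.Nonempty
  · obtain ⟨τ, ⟨hτ, hFτ⟩, hτ_min⟩ : ∃ τ, IsLeast {t | t₀ ≤ t ∧ x j ≤ F t} τ :=
      ⟨_, (isClosed_Ici.inter (isClosed_le continuous_const hF_cont)).isLeast_csInf hhit
        ⟨t₀, fun _ ht => ht.1⟩⟩
    obtain ⟨G, hG_meas, hG⟩ := ih τ (F τ)
    have hG_ge (t) (ht : τ ≤ t) : x j ≤ G t :=
      hFτ.trans (hG.le_of_nonneg (survivingRate_nonneg ha0) ht)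
    have hF_lt (s) (hs : s ∈ Ico t₀ τ) : F s < x j :=
      lt_of_not_ge fun hle => hs.2.not_ge (hτ_min ⟨hs.1, hle⟩)
    have hF_insert : IsIntegralSolution (survivingRate x a (insert j S)) t₀ c F (Icc t₀ τ) :=
      (hF.mono Icc_subset_Ici_self).congr Icc_subset_Ici_self (eqOn_refl _ _) fun t ht u hu =>
        hrate (hF_lt u ⟨hu.1.le, hu.2.trans_le ht.2⟩) u
    have hG_insert : IsIntegralSolution (survivingRate x a (insert j S)) τ (F τ) G (Ici τ) :=
      hG.congr Subset.rfl (eqOn_refl _ _) fun t _ u hu =>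
        survivingRate_insert_of_le (hG_ge u hu.1.le) u
    have hFG_meas : Measurable ((Iic τ).piecewise F G) :=
      hF_cont.measurable.piecewise measurableSet_Iic hG_meas
    exact ⟨_, hFG_meas, hF_insert.piecewise hG_insert hτ fun p q =>
      (integrable_survivingRate ha hFG_meas).intervalIntegrable⟩
  · have hF_lt (t) (ht : t₀ ≤ t) : F t < x j := lt_of_not_ge fun hle => hhit ⟨t, ht, hle⟩
    exact ⟨F, hF_cont.measurable, hF.congr Subset.rfl (eqOn_refl _ _) fun _ _ u hu =>
      hrate (hF_lt u hu.1.le) u⟩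

lemma exists_isIntegralSolution_survivingRate (ha : ∀ i, Integrable (a i))
    (ha0 : ∀ i s, 0 ≤ a i s) (S : Finset ι) (t₀ c : ℝ) :
    ∃ A : ℝ → ℝ, Measurable A ∧
      IsIntegralSolution (survivingRate x a S) t₀ c A (Ici t₀) := by
  classical
  induction S using Finset.induction_on_min_value x generalizing t₀ c with
  | empty => exact ⟨fun _ => c, measurable_const, fun t _ => by simp [survivingRate]⟩
  | insert j S _ hj ih => exact exists_isIntegralSolution_survivingRate_insert ha ha0 hj ih t₀ c

end SurvivingRate

lemma integrable_extend_subtypeVal {α : Type*} [MeasurableSpace α] {μ : Measure α} {s : Set α}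
    {F : Type*} [NormedAddCommGroup F] (hs : MeasurableSet s) {g : s → F}
    (hg : Integrable g (μ.comap Subtype.val)) :
    Integrable (Function.extend Subtype.val g 0) μ := by
  have hsupp : Function.support (Function.extend Subtype.val g 0) ⊆ s := fun t ht => by
    by_contra hts
    exact ht (Function.extend_apply' _ _ _ fun ⟨u, hu⟩ => hts (hu ▸ u.2))
  rw [← integrableOn_iff_integrable_of_support_subset hsupp, integrableOn_iff_comap_subtypeVal hs,
    Function.extend_comp Subtype.val_injective]
  exact hg

lemma integrable_comap_subtypeVal_of_continuous {α : Type*} [TopologicalSpace α] [T2Space α]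
    [MeasurableSpace α] [BorelSpace α] {μ : Measure α} [IsFiniteMeasureOnCompacts μ] {K : Set α}
    {F : Type*} [NormedAddCommGroup F] (hK : IsCompact K) {g : K → F} (hg : Continuous g) :
    Integrable g (μ.comap Subtype.val) := by
  have : CompactSpace K := isCompact_iff_compactSpace.1 hK
  have : IsFiniteMeasureOnCompacts (μ.comap ((↑) : K → α)) :=
    .comap' μ continuous_subtype_val (.subtype_coe hK.measurableSet)
  exact hg.integrable_of_hasCompactSupport (.of_compactSpace g)

section PathHazard

variable {E ι : Type*} {T : ℝ} {ζ : E → ℝ} {c : NNReal} {w : ι → Icc (0 : ℝ) T → E}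

/-- Hazard `c ζ(w i t)` that particle `i` contributes at time `t`, extended by `0` outside
`[0, T]`. -/
noncomputable def pathHazard (ζ : E → ℝ) (c : NNReal) (w : ι → Icc (0 : ℝ) T → E) (i : ι) :
    ℝ → ℝ :=
  Function.extend Subtype.val (fun t => c * ζ (w i t)) 0

lemma pathHazard_nonneg (hζ : ∀ y, 0 ≤ ζ y) (i : ι) (s : ℝ) : 0 ≤ pathHazard ζ c w i s :=
  Function.extend_nonneg (fun t => mul_nonneg c.2 (hζ (w i t))) le_rfl s

lemma integrable_pathHazard (hw : ∀ i, Integrable (fun t => ζ (w i t)) (volume.comap Subtype.val))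
    (i : ι) : Integrable (pathHazard ζ c w i) :=
  integrable_extend_subtypeVal measurableSet_Icc ((hw i).const_mul _)

end PathHazard

section Particles

variable {E ι : Type*} [MeasurableSpace E] [Fintype ι] {T : ℝ} {ζ : E → ℝ} {c : NNReal}
  {x : ι → ℝ} {w : ι → Icc (0 : ℝ) T → E}

/-- Sum of Dirac masses, each of weight `c`, at the positions `y i` of those particles whose
threshold `x i` exceeds the cumulative hazard `r`. -/
noncomputable def survivorMeasure (c : NNReal) (x : ι → ℝ) (y : ι → E) (r : ℝ) : Measure E :=
  (c : ℝ≥0∞) • ∑ i, if r < x i then Measure.dirac (y i) else 0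

/-- `μ` solves on `[0, T]` the empirical measure equation with killing at rate `ζ`, for paths `w`,
thresholds `x` and mass `c` per particle. Only the restriction of `μ` to `[0, T]` matters; `μ` is a
map on `ℝ` so that it can be integrated over subintervals. -/
def IsKillingSolution (ζ : E → ℝ) (c : NNReal) (x : ι → ℝ) (w : ι → Icc (0 : ℝ) T → E)
    (μ : ℝ → Measure E) : Prop :=
  IntegrableOn (fun s => ∫ z, ζ z ∂(μ s)) (Icc 0 T) ∧
    ∀ t, ∀ ht : t ∈ Icc (0 : ℝ) T,
      μ t = survivorMeasure c x (fun i => w i ⟨t, ht⟩) (∫ s in (0 : ℝ)..t, ∫ z, ζ z ∂(μ s))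

lemma integral_survivorMeasure (hζ : StronglyMeasurable ζ) (y : ι → E) (r : ℝ) :
    ∫ z, ζ z ∂(survivorMeasure c x y r) = ∑ i, if r < x i then c * ζ (y i) else 0 := by
  rw [survivorMeasure, integral_smul_measure, integral_finsetSum_measure, Finset.smul_sum]
  · refine Finset.sum_congr rfl fun i _ => ?_
    split_ifs <;> simp [integral_dirac' _ _ hζ]
  · intro i _
    split_ifs
    exacts [integrable_dirac' hζ enorm_lt_top, integrable_zero_measure]

lemma integral_survivorMeasure_path (hζ : StronglyMeasurable ζ) (t : Icc (0 : ℝ) T) (r : ℝ) :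
    ∫ z, ζ z ∂(survivorMeasure c x (fun i => w i t) r) =
      survivingRate x (pathHazard ζ c w) Finset.univ t r := by
  simp only [integral_survivorMeasure hζ, survivingRate, pathHazard,
    Subtype.val_injective.extend_apply]

namespace IsKillingSolution

variable {μ ν : ℝ → Measure E}

lemma integral_eq_survivingRate (hζ : StronglyMeasurable ζ) (hμ : IsKillingSolution ζ c x w μ) :
    EqOn (fun t => ∫ z, ζ z ∂(μ t))
      (fun t => survivingRate x (pathHazard ζ c w) Finset.univ t
        (∫ s in (0 : ℝ)..t, ∫ z, ζ z ∂(μ s))) (Icc 0 T) := by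
  intro t ht
  dsimp only
  rw [← integral_survivorMeasure_path hζ ⟨t, ht⟩, ← hμ.2 t ht]

lemma isIntegralSolution (hζ : StronglyMeasurable ζ) (hμ : IsKillingSolution ζ c x w μ) :
    IsIntegralSolution (survivingRate x (pathHazard ζ c w) Finset.univ) 0 0
      (fun t => ∫ s in (0 : ℝ)..t, ∫ z, ζ z ∂(μ s)) (Icc 0 T) := by
  intro t ht
  rw [zero_add]
  exact intervalIntegral.integral_congr_Ioo_of_le ht.1 fun s hs =>
    hμ.integral_eq_survivingRate hζ ⟨hs.1.le, hs.2.le.trans ht.2⟩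

theorem eqOn (hζ : StronglyMeasurable ζ) (hζ0 : ∀ y, 0 ≤ ζ y)
    (hμ : IsKillingSolution ζ c x w μ) (hν : IsKillingSolution ζ c x w ν) :
    EqOn μ ν (Icc 0 T) := by
  intro t ht
  have hA := IsIntegralSolution.eqOn_of_antitone
    (survivingRate_antitone (pathHazard_nonneg hζ0))
    (hμ.isIntegralSolution hζ) (hν.isIntegralSolution hζ)
    (hμ.1.congr_fun (hμ.integral_eq_survivingRate hζ) measurableSet_Icc)
    (hν.1.congr_fun (hν.integral_eq_survivingRate hζ) measurableSet_Icc) ht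
  dsimp only at hA
  rw [hμ.2 t ht, hν.2 t ht, hA]

end IsKillingSolution

theorem exists_isKillingSolution (hζ : StronglyMeasurable ζ) (hζ0 : ∀ y, 0 ≤ ζ y)
    (hw : ∀ i, Integrable (fun t => ζ (w i t)) (volume.comap Subtype.val)) :
    ∃ μ, IsKillingSolution ζ c x w μ := by
  obtain ⟨A, hA_meas, hA⟩ := exists_isIntegralSolution_survivingRate (x := x)
    (integrable_pathHazard (c := c) hw) (pathHazard_nonneg hζ0) Finset.univ 0 0
  let μ : ℝ → Measure E :=
    Function.extend Subtype.val (fun t => survivorMeasure c x (fun i => w i t) (A t)) 0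
  have hμ (t : Icc (0 : ℝ) T) : μ t = survivorMeasure c x (fun i => w i t) (A t) :=
    Subtype.val_injective.extend_apply _ _ t
  have hrate : EqOn (fun s => ∫ z, ζ z ∂(μ s))
      (fun s => survivingRate x (pathHazard ζ c w) Finset.univ s (A s)) (Icc 0 T) := by
    intro s hs
    dsimp only
    rw [hμ ⟨s, hs⟩, integral_survivorMeasure_path hζ]
  refine ⟨μ, ?_, fun t ht => ?_⟩
  · exact (integrable_survivingRate (integrable_pathHazard hw) hA_meas).integrableOn.congr_fun
      hrate.symm measurableSet_Icc
  · have hAt : A t = ∫ s in (0 : ℝ)..t, ∫ z, ζ z ∂(μ s) := by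
      rw [hA t ht.1, zero_add]
      exact intervalIntegral.integral_congr_Ioo_of_le ht.1 fun s hs =>
        (hrate ⟨hs.1.le, hs.2.le.trans ht.2⟩).symm
    rw [← hAt]
    exact hμ ⟨t, ht⟩

theorem stmt8_general (hζ : StronglyMeasurable ζ) (hζ0 : ∀ y, 0 ≤ ζ y) (c : NNReal) (x : ι → ℝ)
    (w : ι → Icc (0 : ℝ) T → E)
    (hw : ∀ i, Integrable (fun t => ζ (w i t)) (volume.comap Subtype.val)) :
    ∃ μ, IsKillingSolution ζ c x w μ ∧
      ∀ μ', IsKillingSolution ζ c x w μ' → ∀ t ∈ Icc (0 : ℝ) T, μ' t = μ t :=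
  (exists_isKillingSolution hζ hζ0 hw).imp fun _ hμ =>
    ⟨hμ, fun _ hμ' => hμ'.eqOn hζ hζ0 hμ⟩

end Particles

/-- well-posedness of the empirical measure equation
`μ(t) = (1/n) Σᵢ δ_{wᵢ(t)} 1{xᵢ > ∫₀ᵗ ⟨ζ, μ(s)⟩ ds}` for continuous `ζ ≥ 0`, continuous
driving paths `wᵢ` and pairwise distinct strictly positive thresholds `xᵢ`: there is a unique
(as a map on `[0,T]`) solution `μ` with `s ↦ ⟨ζ, μ(s)⟩` measurable and integrable on `[0,T]`. -/
theorem stmt8 (T : ℝ) (hT : 0 < T) (d n : ℕ) (hn : 0 < n)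
    (ζ : EuclideanSpace ℝ (Fin d) → ℝ) (hζc : Continuous ζ) (hζ0 : ∀ y, 0 ≤ ζ y)
    (w : Fin n → C(Icc (0 : ℝ) T, EuclideanSpace ℝ (Fin d)))
    (x : Fin n → ℝ) (hxpos : ∀ i, 0 < x i) (hxinj : Function.Injective x) :
    ∃ μ : ℝ → Measure (EuclideanSpace ℝ (Fin d)),
      (IntegrableOn (fun s => ∫ z, ζ z ∂(μ s)) (Icc 0 T) ∧
        ∀ t, ∀ ht : t ∈ Icc (0 : ℝ) T,
          μ t = (n : ℝ≥0∞)⁻¹ • ∑ i : Fin n,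
            (if (∫ s in (0 : ℝ)..t, ∫ z, ζ z ∂(μ s)) < x i
              then Measure.dirac (w i ⟨t, ht⟩) else 0)) ∧
      ∀ μ' : ℝ → Measure (EuclideanSpace ℝ (Fin d)),
        (IntegrableOn (fun s => ∫ z, ζ z ∂(μ' s)) (Icc 0 T) ∧
          ∀ t, ∀ ht : t ∈ Icc (0 : ℝ) T,
            μ' t = (n : ℝ≥0∞)⁻¹ • ∑ i : Fin n,
              (if (∫ s in (0 : ℝ)..t, ∫ z, ζ z ∂(μ' s)) < x i
                then Measure.dirac (w i ⟨t, ht⟩) else 0)) →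
        ∀ t ∈ Icc (0 : ℝ) T, μ' t = μ t := by
  have hc : (((n : NNReal)⁻¹ : NNReal) : ℝ≥0∞) = (n : ℝ≥0∞)⁻¹ := by
    rw [ENNReal.coe_inv (by positivity), ENNReal.coe_natCast]
  simpa only [IsKillingSolution, survivorMeasure, hc] using
    stmt8_general hζc.stronglyMeasurable hζ0 (n : NNReal)⁻¹ x (fun i => w i) fun i =>
      integrable_comap_subtypeVal_of_continuous isCompact_Icc (hζc.comp (w i).continuous)
end

section
/- In the setting of the previous statement (ζ : ℝ^d → [0,∞) continuous, w₁,…,w_n ∈ C([0,T];ℝ^d), x₁,…,x_n pairwise distinct strictly positive reals, and μ the unique solution of μ(t) = (1/n) Σ_{i=1}^n δ_{w_i(t)} · 1{ x_i > ∫₀ᵗ ⟨ζ, μ(s)⟩ ds }), the map t ↦ μ(t) is right-continuous with left limits in the weak topology on finite measures, and for every t ∈ (0,T] and every Borel set A ⊆ ℝ^d, 0 ≤ μ(t−)(A) − μ(t)(A) ≤ 1/n, where μ(t−) denotes the left limit at t. -/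
open MeasureTheory Set ENNReal BoundedContinuousFunction Filter Topology

/-!
The clock `t ↦ ∫₀ᵗ ⟨ζ, μ(s)⟩ ds` is continuous and nondecreasing, so the set of indices whose
threshold it has not reached decreases in `t`. As a decreasing function into a finite order, this
set is eventually constant on the left of each `t`, and, by continuity of the clock, it equals its
value at `t` on the right of `t`. Hence the one-sided limits of `μ` are limits of sums of Dirac
masses over a fixed index set. The index sets to the left of `t` and at `t` differ only by indices
whose threshold equals the clock at `t`, and distinct thresholds leave room for only one of them.
-/

theorem exists_eventually_eq_nhdsLT_of_antitone {α β : Type*} [LinearOrder α] [TopologicalSpace α]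
    [ClosedIicTopology α] [PartialOrder β] [WellFoundedLT β] {f : α → β} (hf : Antitone f) (t : α) :
    ∃ b, ∀ᶠ s in 𝓝[<] t, f s = b := by
  rcases (Iio t).eq_empty_or_nonempty with h_empty | h_nonempty
  · exact ⟨f t, by simp [h_empty]⟩
  · obtain ⟨_, ⟨r, hrt, rfl⟩, h_min⟩ :=
      wellFounded_lt.has_min (f '' Iio t) (h_nonempty.image f)
    refine ⟨f r, ?_⟩
    filter_upwards [Ioo_mem_nhdsLT hrt] with s hs
    exact (hf hs.1.le).eq_of_not_lt (h_min _ (mem_image_of_mem f hs.2))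

section Survivors

variable {ι α R : Type*} [Fintype ι] [LinearOrder R]

/-- The indices `i` that are still alive when the clock shows `a`, i.e. whose threshold `x i` has
not been reached: the inequality `a < x i` is strict, as in the equation defining `μ`. -/
def survivors (x : ι → R) (a : R) : Finset ι := {i | a < x i}

theorem mem_survivors {x : ι → R} {a : R} {i : ι} : i ∈ survivors x a ↔ a < x i := by
  simp [survivors]

theorem survivors_antitone (x : ι → R) : Antitone (survivors x) := fun _ _ hab _ hi =>
  mem_survivors.2 (hab.trans_lt (mem_survivors.1 hi))

variable [LinearOrder α] [TopologicalSpace α] [TopologicalSpace R] [OrderClosedTopology R]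
  {I : α → R} {t : α}

theorem eventually_survivors_eq_nhdsGT (x : ι → R) (hI : Monotone I)
    (hIt : ContinuousWithinAt I (Ioi t) t) :
    ∀ᶠ s in 𝓝[>] t, survivors x (I s) = survivors x (I t) := by
  have h_alive : ∀ᶠ s in 𝓝[>] t, ∀ i ∈ survivors x (I t), I s < x i :=
    (Finset.eventually_all _).2 fun i hi => hIt.eventually_lt_const (mem_survivors.1 hi)
  filter_upwards [h_alive, self_mem_nhdsWithin] with s hs hts
  exact (survivors_antitone x (hI (le_of_lt hts))).antisymm fun i hi => mem_survivors.2 (hs i hi)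

theorem exists_eventually_survivors_eq_nhdsLT [ClosedIicTopology α] (x : ι → R) (hI : Monotone I)
    (hIt : ContinuousWithinAt I (Iio t) t) :
    ∃ S : Finset ι, (∀ᶠ s in 𝓝[<] t, survivors x (I s) = S) ∧
      survivors x (I t) ⊆ S ∧ ∀ i ∈ S, I t ≤ x i := by
  rcases eq_or_neBot (𝓝[<] t) with h_bot | _
  · exact ⟨survivors x (I t), by simp [h_bot], subset_rfl, fun i hi => (mem_survivors.1 hi).le⟩
  · obtain ⟨S, hS⟩ :=
      exists_eventually_eq_nhdsLT_of_antitone ((survivors_antitone x).comp_monotone hI) t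
    refine ⟨S, hS, ?_, fun i hi => le_of_tendsto hIt ?_⟩
    · obtain ⟨s, rfl, hst⟩ := (hS.and self_mem_nhdsWithin).exists
      exact survivors_antitone x (hI (le_of_lt hst))
    · filter_upwards [hS] with s hs
      exact (mem_survivors.1 (hs.ge hi)).le

end Survivors

section AtomicMeasure

variable {ι κ E : Type*} [MeasurableSpace E] {c : ℝ≥0∞} {S S' : Finset ι} {y : ι → E}

/-- The measure with an atom of mass `c` at `y i` for each index `i ∈ S` (atoms at coinciding points
add up). With `c = 1/n` this is the empirical measure of the particles with index in `S`. -/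
noncomputable def atomicMeasure (c : ℝ≥0∞) (S : Finset ι) (y : ι → E) : Measure E :=
  c • ∑ i ∈ S, Measure.dirac (y i)

theorem isFiniteMeasure_atomicMeasure (hc : c ≠ ∞) : IsFiniteMeasure (atomicMeasure c S y) :=
  Measure.smul_finite _ hc

theorem atomicMeasure_mono (h : S ⊆ S') : atomicMeasure c S y ≤ atomicMeasure c S' y := by
  unfold atomicMeasure
  gcongr
  exact fun i _ _ => Measure.zero_le _

theorem atomicMeasure_apply_le_add_card_sdiff [DecidableEq ι] (h : S ⊆ S') (A : Set E) :
    atomicMeasure c S' y A ≤ atomicMeasure c S y A + (S' \ S).card * c := by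
  have h_lost : ∑ i ∈ S' \ S, Measure.dirac (y i) A ≤ (S' \ S).card := by
    simpa using Finset.sum_le_sum fun i (_ : i ∈ S' \ S) => prob_le_one (μ := .dirac (y i)) (s := A)
  simp only [atomicMeasure, Measure.smul_apply, Measure.finsetSum_apply, smul_eq_mul]
  calc c * ∑ i ∈ S', Measure.dirac (y i) A
      = c * ∑ i ∈ S, Measure.dirac (y i) A + (∑ i ∈ S' \ S, Measure.dirac (y i) A) * c := by
        rw [← Finset.sum_sdiff h]; ring
    _ ≤ c * ∑ i ∈ S, Measure.dirac (y i) A + (S' \ S).card * c := by gcongr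

theorem integral_atomicMeasure {F : Type*} [NormedAddCommGroup F] [NormedSpace ℝ F]
    [CompleteSpace F] {f : E → F} (hf : StronglyMeasurable f) :
    ∫ z, f z ∂(atomicMeasure c S y) = c.toReal • ∑ i ∈ S, f (y i) := by
  rw [atomicMeasure, integral_smul_measure,
    integral_finsetSum_measure fun i _ => integrable_dirac' hf enorm_lt_top]
  simp only [integral_dirac' _ _ hf]

theorem tendsto_integral_atomicMeasure [TopologicalSpace E] [OpensMeasurableSpace E] {l : Filter κ}
    {Y : κ → ι → E} {U : κ → Finset ι} (hU : ∀ᶠ s in l, U s = S)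
    (hY : ∀ i ∈ S, Tendsto (fun s => Y s i) l (𝓝 (y i))) {f : E → ℝ} (hf : Continuous f) :
    Tendsto (fun s => ∫ z, f z ∂(atomicMeasure c (U s) (Y s))) l
      (𝓝 (∫ z, f z ∂(atomicMeasure c S y))) := by
  simp only [integral_atomicMeasure hf.stronglyMeasurable]
  have h_fixed : Tendsto (fun s => c.toReal • ∑ i ∈ S, f (Y s i)) l
      (𝓝 (c.toReal • ∑ i ∈ S, f (y i))) :=
    (tendsto_finsetSum S fun i hi => (hf.tendsto _).comp (hY i hi)).const_smul _
  refine h_fixed.congr' ?_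
  filter_upwards [hU] with s hs
  rw [hs]

end AtomicMeasure

section KilledMeasure

variable {ι α R E : Type*} [Fintype ι] [LinearOrder R] [MeasurableSpace E]

/-- The empirical measure at time `t` of particles of mass `c` that follow the paths `w i`, where
the particle `i` is removed as soon as the clock `I` reaches its threshold `x i`. -/
noncomputable def killedMeasure (c : ℝ≥0∞) (x : ι → R) (I : α → R) (w : ι → α → E) (t : α) :
    Measure E :=
  atomicMeasure c (survivors x (I t)) (w · t)

theorem killedMeasure_eq_sum_ite (c : ℝ≥0∞) (x : ι → R) (I : α → R) (w : ι → α → E) (t : α) :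
    killedMeasure c x I w t = c • ∑ i, if I t < x i then Measure.dirac (w i t) else 0 := by
  rw [killedMeasure, atomicMeasure, survivors, Finset.sum_filter]

variable [LinearOrder α] [TopologicalSpace α] [TopologicalSpace R] [OrderClosedTopology R]
  [TopologicalSpace E] [OpensMeasurableSpace E] {c : ℝ≥0∞} {x : ι → R} {I : α → R} {w : ι → α → E}
  {t : α}

theorem tendsto_integral_killedMeasure_nhdsGT (hI : Monotone I)
    (hIt : ContinuousWithinAt I (Ioi t) t) (hw : ∀ i, ContinuousWithinAt (w i) (Ioi t) t)
    {f : E → ℝ} (hf : Continuous f) :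
    Tendsto (fun s => ∫ z, f z ∂(killedMeasure c x I w s)) (𝓝[>] t)
      (𝓝 (∫ z, f z ∂(killedMeasure c x I w t))) :=
  tendsto_integral_atomicMeasure (eventually_survivors_eq_nhdsGT x hI hIt) (fun i _ => hw i) hf

theorem exists_leftLim_killedMeasure [ClosedIicTopology α] (hc : c ≠ ∞) {k : ℕ}
    (hx : ∀ a, ({i | x i = a} : Finset ι).card ≤ k) (hI : Monotone I)
    (hIt : ContinuousWithinAt I (Iio t) t) (hw : ∀ i, ContinuousWithinAt (w i) (Iio t) t) :
    ∃ ν : Measure E, IsFiniteMeasure ν ∧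
      (∀ f : E → ℝ, Continuous f →
        Tendsto (fun s => ∫ z, f z ∂(killedMeasure c x I w s)) (𝓝[<] t) (𝓝 (∫ z, f z ∂ν))) ∧
      ∀ A : Set E, killedMeasure c x I w t A ≤ ν A ∧ ν A ≤ killedMeasure c x I w t A + k * c := by
  classical
  obtain ⟨S, hS, h_sub, h_le⟩ := exists_eventually_survivors_eq_nhdsLT x hI hIt
  have h_lost : S \ survivors x (I t) ⊆ ({i | x i = I t} : Finset ι) := fun i hi => by
    obtain ⟨hiS, hi_dead⟩ := Finset.mem_sdiff.1 hi
    exact Finset.mem_filter.2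
      ⟨Finset.mem_univ i, (not_lt.1 (mt mem_survivors.2 hi_dead)).antisymm (h_le i hiS)⟩
  have h_card : (S \ survivors x (I t)).card ≤ k := (Finset.card_le_card h_lost).trans (hx _)
  refine ⟨atomicMeasure c S (w · t), isFiniteMeasure_atomicMeasure hc,
    fun f hf => tendsto_integral_atomicMeasure hS (fun i _ => hw i) hf,
    fun A => ⟨atomicMeasure_mono h_sub A, ?_⟩⟩
  refine (atomicMeasure_apply_le_add_card_sdiff h_sub A).trans ?_
  rw [killedMeasure]
  gcongr

end KilledMeasure

theorem monotoneOn_primitive_of_nonneg {g : ℝ → ℝ} {a b : ℝ} (hg : ∀ s ∈ Icc a b, 0 ≤ g s)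
    (hgi : IntegrableOn g (Icc a b)) : MonotoneOn (fun t => ∫ s in a..t, g s) (Icc a b) := by
  intro r hr t ht hrt
  refine intervalIntegral.integral_mono_interval le_rfl hr.1 hrt ?_ ?_
  · exact ae_restrict_of_forall_mem measurableSet_Ioc fun s hs => hg s ⟨hs.1.le, hs.2.trans ht.2⟩
  · rw [intervalIntegrable_iff_integrableOn_Icc_of_le ht.1]
    exact hgi.mono_set (Icc_subset_Icc_right ht.2)

theorem stmt9_general {ι α R E : Type*} [Fintype ι] [LinearOrder α] [TopologicalSpace α]
    [OrderTopology α] [LinearOrder R] [TopologicalSpace R] [OrderClosedTopology R]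
    [TopologicalSpace E] [MeasurableSpace E] [OpensMeasurableSpace E] {a b : α} (hab : a ≤ b)
    {c : ℝ≥0∞} (hc : c ≠ ∞) {x : ι → R} {k : ℕ}
    (hx : ∀ r, ({i | x i = r} : Finset ι).card ≤ k) {I : α → R}
    (hI : MonotoneOn I (Icc a b)) (hIc : ContinuousOn I (Icc a b)) (w : ι → C(Icc a b, E))
    {μ : α → Measure E}
    (hμ : ∀ t, ∀ ht : t ∈ Icc a b,
      μ t = c • ∑ i, if I t < x i then Measure.dirac (w i ⟨t, ht⟩) else 0) :
    (∀ t ∈ Ico a b, ∀ f : E →ᵇ ℝ,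
      Tendsto (fun s => ∫ z, f z ∂(μ s)) (𝓝[>] t) (𝓝 (∫ z, f z ∂(μ t)))) ∧
    (∀ t ∈ Ioc a b, ∃ ν : Measure E, IsFiniteMeasure ν ∧
      (∀ f : E →ᵇ ℝ, Tendsto (fun s => ∫ z, f z ∂(μ s)) (𝓝[<] t) (𝓝 (∫ z, f z ∂ν))) ∧
      ∀ A : Set E, MeasurableSet A → μ t A ≤ ν A ∧ ν A ≤ μ t A + k * c) := by
  let J : α → R := IccExtend hab ((Icc a b).domRestrict I)
  let W : ι → α → E := fun i => IccExtend hab (w i)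
  have hJ : Monotone J := (monotoneOn_iff_monotone.1 hI).IccExtend hab
  have hJc : Continuous J := hIc.domRestrict.Icc_extend'
  have hW : ∀ i, Continuous (W i) := fun i => (w i).continuous.Icc_extend'
  have hμ_killed : EqOn μ (killedMeasure c x J W) (Icc a b) := fun t ht => by
    simp only [hμ t ht, killedMeasure_eq_sum_ite, J, W, IccExtend_of_mem hab _ ht]
    rfl
  refine ⟨fun t ht f => ?_, fun t ht => ?_⟩
  · rw [hμ_killed (Ico_subset_Icc_self ht)]
    refine (tendsto_integral_killedMeasure_nhdsGT hJ hJc.continuousWithinAt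
      (fun i => (hW i).continuousWithinAt) f.continuous).congr' ?_
    filter_upwards [Icc_mem_nhdsGT_of_mem ht] with s hs
    rw [hμ_killed hs]
  · obtain ⟨ν, hν, h_tendsto, h_jump⟩ := exists_leftLim_killedMeasure hc hx hJ
      hJc.continuousWithinAt fun i => (hW i).continuousWithinAt (x := t)
    rw [hμ_killed (Ioc_subset_Icc_self ht)]
    refine ⟨ν, hν, fun f => (h_tendsto f f.continuous).congr' ?_, fun A _ => h_jump A⟩
    filter_upwards [Icc_mem_nhdsLT_of_mem ht] with s hs
    rw [hμ_killed hs]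

/-- the solution `μ` of the empirical measure equation
`μ(t) = (1/n) Σᵢ δ_{wᵢ(t)} 1{xᵢ > ∫₀ᵗ ⟨ζ, μ(s)⟩ ds}` (with continuous `ζ ≥ 0`, continuous
paths `wᵢ`, pairwise distinct strictly positive thresholds `xᵢ`) is right-continuous with left
limits in the weak topology, and at every `t ∈ (0,T]` the left limit `ν = μ(t-)` satisfies
`0 ≤ ν(A) - μ(t)(A) ≤ 1/n` for every Borel set `A`. -/
theorem stmt9 (T : ℝ) (hT : 0 < T) (d n : ℕ) (hn : 0 < n)
    (ζ : EuclideanSpace ℝ (Fin d) → ℝ) (hζc : Continuous ζ) (hζ0 : ∀ y, 0 ≤ ζ y)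
    (w : Fin n → C(Icc (0 : ℝ) T, EuclideanSpace ℝ (Fin d)))
    (x : Fin n → ℝ) (hxpos : ∀ i, 0 < x i) (hxinj : Function.Injective x)
    (μ : ℝ → Measure (EuclideanSpace ℝ (Fin d)))
    (hμint : IntegrableOn (fun s => ∫ z, ζ z ∂(μ s)) (Icc 0 T))
    (hμeq : ∀ t, ∀ ht : t ∈ Icc (0 : ℝ) T,
      μ t = (n : ℝ≥0∞)⁻¹ • ∑ i : Fin n,
        (if (∫ s in (0 : ℝ)..t, ∫ z, ζ z ∂(μ s)) < x i
          then Measure.dirac (w i ⟨t, ht⟩) else 0)) :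
    (∀ t ∈ Ico (0 : ℝ) T, ∀ f : EuclideanSpace ℝ (Fin d) →ᵇ ℝ,
      Tendsto (fun s => ∫ z, f z ∂(μ s)) (𝓝[>] t) (𝓝 (∫ z, f z ∂(μ t)))) ∧
    (∀ t ∈ Ioc (0 : ℝ) T, ∃ ν : Measure (EuclideanSpace ℝ (Fin d)),
      IsFiniteMeasure ν ∧
      (∀ f : EuclideanSpace ℝ (Fin d) →ᵇ ℝ,
        Tendsto (fun s => ∫ z, f z ∂(μ s)) (𝓝[<] t) (𝓝 (∫ z, f z ∂ν))) ∧
      ∀ A : Set (EuclideanSpace ℝ (Fin d)), MeasurableSet A →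
        μ t A ≤ ν A ∧ ν A ≤ μ t A + (n : ℝ≥0∞)⁻¹) := by
  have hI_cont : ContinuousOn (fun t => ∫ s in (0 : ℝ)..t, ∫ z, ζ z ∂(μ s)) (Icc 0 T) := by
    rw [← uIcc_of_le hT.le] at hμint ⊢
    exact intervalIntegral.continuousOn_primitive_interval hμint
  have hI_mono := monotoneOn_primitive_of_nonneg (fun s _ => integral_nonneg hζ0) hμint
  have hx : ∀ r, ({i | x i = r} : Finset (Fin n)).card ≤ 1 := fun r =>
    Finset.card_le_one.2 fun i hi j hj =>
      hxinj ((Finset.mem_filter.1 hi).2.trans (Finset.mem_filter.1 hj).2.symm)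
  simpa only [Nat.cast_one, one_mul] using
    stmt9_general hT.le (by simp [hn.ne']) hx hI_mono hI_cont w hμeq
end

section
/- Let d ∈ ℕ and let ζ : ℝ^d → [0,∞) be continuous and satisfy the subquadratic growth condition. For t > 0 and x ∈ ℝ^d let p(t,x) := (2πt)^{−d/2} exp(−‖x‖²/(2t)) be the Gaussian heat kernel, and set b(t) := ∫_{ℝ^d} ζ(x) p(t,x) dx (which is finite), a(t) := (1 + ∫₀ᵗ b(s) ds)^{-1}, and u(t,x) := a(t) p(t,x). Then: (i) for every t > 0 and x ∈ ℝ^d, ∂u/∂t (t,x) = (1/2) Δ_x u(t,x) − ( ∫_{ℝ^d} ζ(y) u(t,y) dy ) · u(t,x), where Δ_x denotes the Laplacian in the space variable (the sum of the second partial derivatives in the coordinates of x); and (ii) the measures u(t,x) dx converge weakly to the Dirac measure δ₀ on ℝ^d as t ↓ 0. -/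
open MeasureTheory Set Filter Topology BoundedContinuousFunction

/-! The heat kernel `p` solves `∂p/∂t = Δp/2`, so multiplying it by a function of time `a` adds only
the term `a' p = (a'/a) u`. Since `a⁻¹ = 1 + ∫₀ᵗ b` with `b(t) = ∫ ζ p(t,·)` continuous for `t > 0`,
one has `a' = -b a²`, so that `a'/a = -a b = -∫ ζ u`. Tilting `p(t,·)` by `exp (ε‖x‖²)` gives a
multiple of the heat kernel at time `t / (1 - 2εt)`; hence `b` is finite, and bounded near `0`, as
soon as `ζ` grows more slowly than all the functions `exp (ε‖x‖²)`. Then `a → 1` as `t ↓ 0`, and the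
initial condition follows from the Brownian scaling `x = √t y` by dominated convergence. -/

noncomputable section

open Module Real

section HeatKernel

variable {E : Type*} [NormedAddCommGroup E] [InnerProductSpace ℝ E]

/-- The Gaussian heat kernel `p(t,x)` on a Euclidean space `E`, the density at time `t > 0` of a
standard Brownian motion started at the origin. -/
def heatKernel (t : ℝ) (x : E) : ℝ :=
  (2 * π * t) ^ (-(finrank ℝ E : ℝ) / 2) * exp (-‖x‖ ^ 2 / (2 * t))

lemma heatKernel_nonneg {t : ℝ} (ht : 0 ≤ t) (x : E) : 0 ≤ heatKernel t x := by
  unfold heatKernel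
  positivity

lemma continuous_heatKernel (t : ℝ) : Continuous (heatKernel t : E → ℝ) := by
  unfold heatKernel
  fun_prop

lemma heatKernel_sqrt_smul {t : ℝ} (ht : 0 < t) (x : E) :
    √t ^ finrank ℝ E * heatKernel t (√t • x) = heatKernel 1 x := by
  have hpow : √t ^ finrank ℝ E * t ^ (-(finrank ℝ E : ℝ) / 2) = 1 := by
    have hexponent : 1 / 2 * (finrank ℝ E : ℝ) + -(finrank ℝ E : ℝ) / 2 = 0 := by ring
    rw [sqrt_eq_rpow, ← rpow_mul_natCast ht.le, ← rpow_add ht, hexponent, rpow_zero]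
  have hexp : -‖√t • x‖ ^ 2 / (2 * t) = -‖x‖ ^ 2 / (2 * 1) := by
    rw [norm_smul, mul_pow, norm_eq_abs, sq_abs, sq_sqrt ht.le]
    field_simp
  rw [heatKernel, heatKernel, hexp, mul_rpow two_pi_pos.le ht.le, mul_one (2 * π)]
  linear_combination
    (2 * π) ^ (-(finrank ℝ E : ℝ) / 2) * exp (-‖x‖ ^ 2 / (2 * 1)) * hpow

lemma exp_mul_heatKernel {ε t : ℝ} (ht : 0 < t) (hε : 2 * ε * t < 1) (x : E) :
    exp (ε * ‖x‖ ^ 2) * heatKernel t x =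
      (1 - 2 * ε * t) ^ (-(finrank ℝ E : ℝ) / 2) * heatKernel (t / (1 - 2 * ε * t)) x := by
  have hδ : 0 < 1 - 2 * ε * t := sub_pos.2 hε
  have hexp : ε * ‖x‖ ^ 2 + -‖x‖ ^ 2 / (2 * t) = -‖x‖ ^ 2 / (2 * (t / (1 - 2 * ε * t))) := by
    field_simp
    ring
  have htime : (1 - 2 * ε * t) * (2 * π * (t / (1 - 2 * ε * t))) = 2 * π * t := by
    field_simp
  rw [heatKernel, heatKernel, ← hexp, exp_add, ← htime, mul_rpow hδ.le (by positivity)]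
  ring

lemma heatKernel_le_mul_heatKernel {r t T : ℝ} (hr : 0 < r) (hrt : r ≤ t) (htT : t ≤ T) (x : E) :
    heatKernel t x ≤ (r / T) ^ (-(finrank ℝ E : ℝ) / 2) * heatKernel T x := by
  have ht : 0 < t := hr.trans_le hrt
  have hT : 0 < T := ht.trans_le htT
  have hn : -(finrank ℝ E : ℝ) / 2 ≤ 0 := by
    rw [neg_div]
    exact neg_nonpos.2 (by positivity)
  have htime : r / T * (2 * π * T) = 2 * π * r := by field_simp
  rw [heatKernel, heatKernel, ← mul_assoc, ← mul_rpow (by positivity) (by positivity), htime]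
  gcongr ?_ * exp ?_
  · exact rpow_le_rpow_of_nonpos (by positivity) (by gcongr) hn
  · rw [neg_div, neg_div]
    gcongr

lemma hasDerivAt_heatKernel_time {t : ℝ} (ht : t ≠ 0) (x : E) :
    HasDerivAt (fun τ ↦ heatKernel τ x)
      ((‖x‖ ^ 2 / (2 * t ^ 2) - finrank ℝ E / (2 * t)) * heatKernel t x) t := by
  have h2πt : 2 * π * t ≠ 0 := mul_ne_zero two_pi_pos.ne' ht
  have hpow := ((hasDerivAt_id t).const_mul (2 * π)).rpow_const
    (p := -(finrank ℝ E : ℝ) / 2) (Or.inl h2πt)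
  have hexp := ((hasDerivAt_const t (-‖x‖ ^ 2)).fun_div ((hasDerivAt_id t).const_mul 2)
    (mul_ne_zero two_ne_zero ht)).exp
  refine (hpow.mul hexp).congr_deriv ?_
  simp only [id, heatKernel, rpow_sub_one h2πt]
  field_simp
  ring

lemma deriv_deriv_heatKernel_add_smul {t : ℝ} (ht : t ≠ 0) (x v : E) :
    deriv (deriv fun s : ℝ ↦ heatKernel t (x + s • v)) 0 =
      (inner ℝ v x ^ 2 / t ^ 2 - ‖v‖ ^ 2 / t) * heatKernel t x := by
  have hnorm (s : ℝ) : HasDerivAt (fun s : ℝ ↦ -‖x + s • v‖ ^ 2 / (2 * t))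
      (-inner ℝ v (x + s • v) / t) s := by
    have hline : HasDerivAt (fun s : ℝ ↦ x + s • v) v s := by
      simpa using ((hasDerivAt_id s).smul_const v).const_add x
    refine (hline.norm_sq.neg.div_const (2 * t)).congr_deriv ?_
    rw [real_inner_comm]
    field_simp
  have hfst (s : ℝ) : HasDerivAt (fun s : ℝ ↦ heatKernel t (x + s • v))
      (-inner ℝ v (x + s • v) / t * heatKernel t (x + s • v)) s :=
    ((hnorm s).exp.const_mul _).congr_deriv (by unfold heatKernel; ring)
  have hinner : HasDerivAt (fun s : ℝ ↦ -inner ℝ v (x + s • v) / t) (-‖v‖ ^ 2 / t) 0 := by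
    simp only [inner_add_right, inner_smul_right, real_inner_self_eq_norm_sq]
    simpa using (((hasDerivAt_id (0 : ℝ)).mul_const (‖v‖ ^ 2)).const_add
      (inner ℝ v x)).neg.div_const t
  rw [funext fun s ↦ (hfst s).deriv, (hinner.fun_mul (hfst 0)).deriv]
  simp only [zero_smul, add_zero]
  field_simp
  ring

variable {ι : Type*} [Fintype ι]

theorem hasDerivAt_heatKernel_laplacian (v : OrthonormalBasis ι ℝ E) {t : ℝ} (ht : t ≠ 0) (x : E) :
    HasDerivAt (fun τ ↦ heatKernel τ x)
      ((1 / 2) * ∑ i, deriv (deriv fun s : ℝ ↦ heatKernel t (x + s • v i)) 0) t := by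
  refine (hasDerivAt_heatKernel_time ht x).congr_deriv ?_
  simp only [deriv_deriv_heatKernel_add_smul ht, v.norm_eq_one, ← Finset.sum_mul,
    Finset.sum_sub_distrib, ← Finset.sum_div, v.sum_sq_inner_right, Finset.sum_const,
    Finset.card_univ, ← finrank_eq_card_basis v.toBasis]
  simp only [nsmul_eq_mul]
  field_simp

variable [FiniteDimensional ℝ E] [MeasurableSpace E] [BorelSpace E]

lemma integral_heatKernel {t : ℝ} (ht : 0 < t) : ∫ x : E, heatKernel t x = 1 := by
  have hexp (x : E) : -‖x‖ ^ 2 / (2 * t) = -(2 * t)⁻¹ * ‖x‖ ^ 2 := by ring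
  have htime : π / (2 * t)⁻¹ = 2 * π * t := by field_simp
  simp only [heatKernel, hexp]
  rw [integral_const_mul, GaussianFourier.integral_rexp_neg_mul_sq_norm (by positivity), htime,
    ← rpow_add (by positivity), neg_div, neg_add_cancel, rpow_zero]

lemma integrable_heatKernel {t : ℝ} (ht : 0 < t) : Integrable (heatKernel t : E → ℝ) :=
  .of_integral_ne_zero (by simp [integral_heatKernel ht])

end HeatKernel

section HeatAverage

variable {E : Type*} [NormedAddCommGroup E] [InnerProductSpace ℝ E] [FiniteDimensional ℝ E]
  [MeasurableSpace E] [BorelSpace E] {f : E → ℝ}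

/-- The Gaussian average `∫ f p(t,·)`, i.e. the expectation of `f` at a standard Brownian motion at
time `t`. For `f = ζ` this is the function `b(t)`. -/
def heatAverage (f : E → ℝ) (t : ℝ) : ℝ :=
  ∫ x, f x * heatKernel t x

lemma heatAverage_nonneg (hf : ∀ x, 0 ≤ f x) {t : ℝ} (ht : 0 ≤ t) : 0 ≤ heatAverage f t :=
  integral_nonneg fun x ↦ mul_nonneg (hf x) (heatKernel_nonneg ht x)

lemma heatAverage_eq_integral_sqrt_smul (f : E → ℝ) {t : ℝ} (ht : 0 < t) :
    heatAverage f t = ∫ x, f (√t • x) * heatKernel 1 x := by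
  have hpow : √t ^ finrank ℝ E ≠ 0 := (pow_pos (sqrt_pos.2 ht) _).ne'
  calc heatAverage f t
      = √t ^ finrank ℝ E * ∫ x, f (√t • x) * heatKernel t (√t • x) := by
        rw [Measure.integral_comp_smul_of_nonneg volume (fun x ↦ f x * heatKernel t x) √t
          (hR := sqrt_nonneg t), smul_eq_mul, mul_inv_cancel_left₀ hpow, heatAverage]
    _ = ∫ x, f (√t • x) * heatKernel 1 x := by
        rw [← integral_const_mul]
        simp only [← heatKernel_sqrt_smul ht, mul_left_comm]

theorem tendsto_heatAverage_nhdsGT_zero (f : E →ᵇ ℝ) :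
    Tendsto (heatAverage f) (𝓝[>] 0) (𝓝 (f 0)) := by
  have hcont : Continuous fun t : ℝ ↦ ∫ x, f (√t • x) * heatKernel 1 x := by
    refine continuous_of_dominated (bound := fun x : E ↦ ‖f‖ * heatKernel 1 x) (fun t ↦ ?_)
      (fun t ↦ ae_of_all _ fun x ↦ ?_) ((integrable_heatKernel one_pos).const_mul _)
      (ae_of_all _ fun x ↦ by fun_prop)
    · have := continuous_heatKernel (E := E) 1
      exact Continuous.aestronglyMeasurable (by fun_prop)
    · rw [norm_mul, norm_of_nonneg (heatKernel_nonneg zero_le_one x)]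
      exact mul_le_mul_of_nonneg_right (f.norm_coe_le_norm _) (heatKernel_nonneg zero_le_one x)
  have hlim := (hcont.tendsto 0).mono_left (nhdsWithin_le_nhds (s := Ioi 0))
  simp only [sqrt_zero, zero_smul, integral_const_mul, integral_heatKernel one_pos,
    mul_one] at hlim
  exact hlim.congr' <| eventually_mem_nhdsWithin.mono fun t ht ↦
    (heatAverage_eq_integral_sqrt_smul f ht).symm

theorem continuousOn_heatAverage (hf : ∀ t, 0 < t → Integrable fun x ↦ f x * heatKernel t x) :
    ContinuousOn (heatAverage f) (Ioi 0) := by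
  intro t (ht : 0 < t)
  refine (continuousAt_of_dominated (bound := fun x ↦
    (t / 2 / (2 * t)) ^ (-(finrank ℝ E : ℝ) / 2) * ‖f x * heatKernel (2 * t) x‖)
    ?_ ?_ ?_ ?_).continuousWithinAt
  · filter_upwards [lt_mem_nhds ht] with s hs using (hf s hs).aestronglyMeasurable
  · filter_upwards [Icc_mem_nhds (half_lt_self ht) (lt_two_mul_self ht)] with s ⟨hts, hst⟩
    refine ae_of_all _ fun x ↦ ?_
    rw [norm_mul, norm_mul, norm_of_nonneg (heatKernel_nonneg ((half_pos ht).le.trans hts) x),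
      norm_of_nonneg (heatKernel_nonneg (by positivity) x), mul_left_comm]
    exact mul_le_mul_of_nonneg_left (heatKernel_le_mul_heatKernel (half_pos ht) hts hst x)
      (norm_nonneg _)
  · exact (hf _ (by positivity)).norm.const_mul _
  · exact ae_of_all _ fun x ↦
      (hasDerivAt_heatKernel_time ht.ne' x).continuousAt.const_mul (f x)

end HeatAverage

section Growth

variable {E : Type*} [NormedAddCommGroup E] {f : E → ℝ}

/-- `f` grows more slowly than every function `exp (ε‖x‖²)`. This is the growth condition that makes
all the Gaussian averages of `f` finite. -/
def HasSubGaussianGrowth (f : E → ℝ) : Prop :=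
  ∀ ε > 0, ∃ C, ∀ x, |f x| ≤ C * exp (ε * ‖x‖ ^ 2)

lemma hasSubGaussianGrowth_of_abs_le_rpow {C q : ℝ} (hq : 0 ≤ q)
    (hf : ∀ x, |f x| ≤ C * (1 + ‖x‖ ^ q)) : HasSubGaussianGrowth f := by
  intro ε hε
  have hC : 0 ≤ C := nonneg_of_mul_nonneg_left ((abs_nonneg _).trans (hf 0)) (by positivity)
  refine ⟨C * (1 + (q / 2 / ε) ^ (q / 2)), fun x ↦ (hf x).trans ?_⟩
  have hone : 1 ≤ exp (ε * ‖x‖ ^ 2) := one_le_exp (by positivity)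
  have hrpow : ‖x‖ ^ q ≤ (q / 2 / ε) ^ (q / 2) * exp (ε * ‖x‖ ^ 2) := by
    have h := ProbabilityTheory.rpow_abs_le_mul_exp_abs (‖x‖ ^ 2) (by positivity : 0 ≤ q / 2) hε.ne'
    rwa [abs_of_pos hε, abs_sq, ← rpow_natCast_mul (norm_nonneg x), Nat.cast_ofNat,
      mul_div_cancel₀ q two_ne_zero] at h
  rw [mul_assoc, add_mul, one_mul]
  gcongr

variable [InnerProductSpace ℝ E]

lemma norm_mul_heatKernel_le {C ε : ℝ} (hf : ∀ x, |f x| ≤ C * exp (ε * ‖x‖ ^ 2)) {t : ℝ}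
    (ht : 0 < t) (hε : 2 * ε * t < 1) (x : E) :
    ‖f x * heatKernel t x‖ ≤ C * (1 - 2 * ε * t) ^ (-(finrank ℝ E : ℝ) / 2) *
      heatKernel (t / (1 - 2 * ε * t)) x := by
  rw [norm_mul, norm_of_nonneg (heatKernel_nonneg ht.le x), mul_assoc C, ← exp_mul_heatKernel ht hε,
    ← mul_assoc]
  exact mul_le_mul_of_nonneg_right (hf x) (heatKernel_nonneg ht.le x)

variable [FiniteDimensional ℝ E] [MeasurableSpace E] [BorelSpace E]

lemma norm_heatAverage_le {C ε : ℝ} (hf : ∀ x, |f x| ≤ C * exp (ε * ‖x‖ ^ 2)) {t : ℝ}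
    (ht : 0 < t) (hε : 2 * ε * t < 1) :
    ‖heatAverage f t‖ ≤ C * (1 - 2 * ε * t) ^ (-(finrank ℝ E : ℝ) / 2) := by
  have ht' : 0 < t / (1 - 2 * ε * t) := div_pos ht (sub_pos.2 hε)
  refine (norm_integral_le_of_norm_le ((integrable_heatKernel ht').const_mul _)
    (ae_of_all _ (norm_mul_heatKernel_le hf ht hε))).trans_eq ?_
  rw [integral_const_mul, integral_heatKernel ht', mul_one]

namespace HasSubGaussianGrowth

theorem integrable_mul_heatKernel (hf : HasSubGaussianGrowth f) (hfm : AEStronglyMeasurable f)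
    {t : ℝ} (ht : 0 < t) : Integrable fun x ↦ f x * heatKernel t x := by
  have hε : 2 * (1 / (4 * t)) * t < 1 := by
    field_simp
    norm_num
  obtain ⟨C, hC⟩ := hf (1 / (4 * t)) (by positivity)
  exact ((integrable_heatKernel (div_pos ht (sub_pos.2 hε))).const_mul _).mono'
    (hfm.mul (continuous_heatKernel t).aestronglyMeasurable)
    (ae_of_all _ (norm_mul_heatKernel_le hC ht hε))

lemma exists_norm_heatAverage_le (hf : HasSubGaussianGrowth f) {T : ℝ} (hT : 0 < T) :
    ∃ C, ∀ t ∈ Ioc 0 T, ‖heatAverage f t‖ ≤ C := by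
  obtain ⟨C, hC⟩ := hf (1 / (4 * T)) (by positivity)
  have hC0 : 0 ≤ C := nonneg_of_mul_nonneg_left ((abs_nonneg _).trans (hC 0)) (exp_pos _)
  refine ⟨C * (1 / 2) ^ (-(finrank ℝ E : ℝ) / 2), fun t ⟨ht, htT⟩ ↦ ?_⟩
  have hε : 2 * (1 / (4 * T)) * t ≤ 1 / 2 := by
    field_simp
    linarith
  refine (norm_heatAverage_le hC ht (by linarith)).trans ?_
  refine mul_le_mul_of_nonneg_left (rpow_le_rpow_of_nonpos (by norm_num) (by linarith) ?_) hC0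
  rw [neg_div]
  exact neg_nonpos.2 (by positivity)

theorem intervalIntegrable_heatAverage (hf : HasSubGaussianGrowth f) (hfm : AEStronglyMeasurable f)
    {T : ℝ} (hT : 0 < T) : IntervalIntegrable (heatAverage f) volume 0 T := by
  obtain ⟨C, hC⟩ := hf.exists_norm_heatAverage_le hT
  have hcont : ContinuousOn (heatAverage f) (Ioc 0 T) :=
    (continuousOn_heatAverage fun _ ↦ hf.integrable_mul_heatKernel hfm).mono Ioc_subset_Ioi_self
  rw [intervalIntegrable_iff_integrableOn_Ioc_of_le hT.le]
  exact .of_bound measure_Ioc_lt_top (hcont.aestronglyMeasurable measurableSet_Ioc) C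
    ((ae_restrict_mem measurableSet_Ioc).mono hC)

end HasSubGaussianGrowth

end Growth

section ReactionDiffusion

variable {E : Type*} [NormedAddCommGroup E] [InnerProductSpace ℝ E] [FiniteDimensional ℝ E]
  [MeasurableSpace E] [BorelSpace E] {ζ : E → ℝ}

/-- The total mass `a(t) = (1 + ∫₀ᵗ b)⁻¹` of the solution, where `b = heatAverage ζ`. -/
def totalMass (ζ : E → ℝ) (t : ℝ) : ℝ :=
  (1 + ∫ s in (0 : ℝ)..t, heatAverage ζ s)⁻¹

/-- The solution `u(t,x) = a(t) p(t,x)` of the reaction–diffusion equation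
`∂u/∂t = (1/2) Δu − (∫ ζ u) u` started from the Dirac mass at the origin. -/
def reactionDiffusion (ζ : E → ℝ) (t : ℝ) (x : E) : ℝ :=
  totalMass ζ t * heatKernel t x

lemma hasDerivAt_totalMass (hζ0 : ∀ x, 0 ≤ ζ x) (hζm : AEStronglyMeasurable ζ)
    (hζ : HasSubGaussianGrowth ζ) {t : ℝ} (ht : 0 < t) :
    HasDerivAt (totalMass ζ) (-heatAverage ζ t * totalMass ζ t ^ 2) t := by
  have hcont := continuousOn_heatAverage fun _ ↦ hζ.integrable_mul_heatKernel hζm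
  have hprim : HasDerivAt (fun τ ↦ 1 + ∫ s in (0 : ℝ)..τ, heatAverage ζ s) (heatAverage ζ t) t :=
    (intervalIntegral.integral_hasDerivAt_right (hζ.intervalIntegrable_heatAverage hζm ht)
      (hcont.stronglyMeasurableAtFilter isOpen_Ioi t ht)
      (hcont.continuousAt (Ioi_mem_nhds ht))).const_add 1
  have hpos : 0 < 1 + ∫ s in (0 : ℝ)..t, heatAverage ζ s :=
    add_pos_of_pos_of_nonneg one_pos <| intervalIntegral.integral_nonneg ht.le
      fun _ hs ↦ heatAverage_nonneg hζ0 hs.1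
  exact (hprim.fun_inv hpos.ne').congr_deriv (by rw [totalMass, inv_pow, ← div_eq_mul_inv])

lemma tendsto_totalMass_nhdsGT_zero (hζm : AEStronglyMeasurable ζ) (hζ : HasSubGaussianGrowth ζ) :
    Tendsto (totalMass ζ) (𝓝[>] 0) (𝓝 1) := by
  have hprim : ContinuousWithinAt (fun t ↦ ∫ s in (0 : ℝ)..t, heatAverage ζ s) (Icc 0 1) 0 := by
    have h := intervalIntegral.continuousOn_primitive_interval'
      (hζ.intervalIntegrable_heatAverage hζm one_pos) left_mem_uIcc
    rw [uIcc_of_le zero_le_one] at h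
    exact h 0 (left_mem_Icc.2 zero_le_one)
  have hmass : ContinuousWithinAt (totalMass ζ) (Icc 0 1) 0 :=
    (hprim.const_add 1).inv₀ (by simp)
  have hzero : totalMass ζ 0 = 1 := by simp [totalMass]
  exact hzero ▸ hmass.tendsto.mono_left (nhdsWithin_le_iff.2 (Icc_mem_nhdsGT one_pos))

lemma integral_mul_reactionDiffusion (f : E → ℝ) (t : ℝ) :
    ∫ x, f x * reactionDiffusion ζ t x = totalMass ζ t * heatAverage f t := by
  simp only [reactionDiffusion, mul_left_comm (f _), integral_const_mul, heatAverage]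

theorem hasDerivAt_reactionDiffusion {ι : Type*} [Fintype ι] (v : OrthonormalBasis ι ℝ E)
    (hζ0 : ∀ x, 0 ≤ ζ x) (hζm : AEStronglyMeasurable ζ) (hζ : HasSubGaussianGrowth ζ) {t : ℝ}
    (ht : 0 < t) (x : E) :
    HasDerivAt (fun τ ↦ reactionDiffusion ζ τ x)
      ((1 / 2) * (∑ i, deriv (deriv fun s : ℝ ↦ reactionDiffusion ζ t (x + s • v i)) 0)
        - (∫ y, ζ y * reactionDiffusion ζ t y) * reactionDiffusion ζ t x) t := by
  refine ((hasDerivAt_totalMass hζ0 hζm hζ ht).mul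
    (hasDerivAt_heatKernel_laplacian v ht.ne' x)).congr_deriv ?_
  rw [integral_mul_reactionDiffusion]
  simp only [reactionDiffusion, deriv_const_mul_field', ← Finset.mul_sum]
  ring

theorem tendsto_integral_mul_reactionDiffusion (hζm : AEStronglyMeasurable ζ)
    (hζ : HasSubGaussianGrowth ζ) (f : E →ᵇ ℝ) :
    Tendsto (fun t ↦ ∫ x, f x * reactionDiffusion ζ t x) (𝓝[>] 0) (𝓝 (f 0)) := by
  simp only [integral_mul_reactionDiffusion]
  simpa using (tendsto_totalMass_nhdsGT_zero hζm hζ).mul (tendsto_heatAverage_nhdsGT_zero f)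

theorem stmt13_general {ι : Type*} [Fintype ι] (v : OrthonormalBasis ι ℝ E)
    (hζ0 : ∀ x, 0 ≤ ζ x) (hζm : AEStronglyMeasurable ζ) (hζ : HasSubGaussianGrowth ζ) :
    (∀ t : ℝ, 0 < t → Integrable fun x ↦ ζ x * heatKernel t x) ∧
    (∀ t : ℝ, 0 < t → ∀ x : E, HasDerivAt (fun τ ↦ reactionDiffusion ζ τ x)
      ((1 / 2) * (∑ i, deriv (deriv fun s : ℝ ↦ reactionDiffusion ζ t (x + s • v i)) 0)
        - (∫ y, ζ y * reactionDiffusion ζ t y) * reactionDiffusion ζ t x) t) ∧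
    (∀ f : E →ᵇ ℝ,
      Tendsto (fun t ↦ ∫ x, f x * reactionDiffusion ζ t x) (𝓝[>] 0) (𝓝 (f 0))) :=
  ⟨fun _ ↦ hζ.integrable_mul_heatKernel hζm,
    fun _ ↦ hasDerivAt_reactionDiffusion v hζ0 hζm hζ,
    tendsto_integral_mul_reactionDiffusion hζm hζ⟩

end ReactionDiffusion

end

/-- with `p(t,x)` the Gaussian heat kernel on `ℝ^d`,
`b(t) = ∫ ζ p(t,·)`, `a(t) = (1 + ∫₀ᵗ b)⁻¹` and `u(t,x) = a(t) p(t,x)`, the function `u`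
solves the nonlinear nonlocal reaction–diffusion equation
`∂u/∂t = (1/2) Δu − (∫ ζ u) u` on `(0,∞) × ℝ^d` (with `b(t)` finite, i.e. `ζ p(t,·)`
integrable, for every `t > 0`), and `u(t,x) dx → δ₀` weakly as `t ↓ 0`. -/
theorem stmt13 (d : ℕ)
    (ζ : EuclideanSpace ℝ (Fin d) → ℝ) (hζc : Continuous ζ) (hζ0 : ∀ y, 0 ≤ ζ y)
    (Cζ pexp : ℝ) (hC : 0 < Cζ) (hp0 : 0 ≤ pexp) (hp2 : pexp < 2)
    (hgrowth : ∀ y, ζ y ≤ Cζ * (1 + ‖y‖ ^ pexp))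
    (p : ℝ → EuclideanSpace ℝ (Fin d) → ℝ)
    (hp : ∀ t x, p t x =
      (2 * Real.pi * t) ^ (-(d : ℝ) / 2) * Real.exp (-‖x‖ ^ 2 / (2 * t)))
    (b : ℝ → ℝ) (hb : ∀ t, b t = ∫ x, ζ x * p t x)
    (a : ℝ → ℝ) (ha : ∀ t, a t = (1 + ∫ s in (0 : ℝ)..t, b s)⁻¹)
    (u : ℝ → EuclideanSpace ℝ (Fin d) → ℝ) (hu : ∀ t x, u t x = a t * p t x) :
    (∀ t : ℝ, 0 < t → Integrable (fun x => ζ x * p t x)) ∧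
    (∀ t : ℝ, 0 < t → ∀ x : EuclideanSpace ℝ (Fin d),
      HasDerivAt (fun τ => u τ x)
        ((1 / 2) * (∑ i : Fin d,
            deriv (deriv (fun s : ℝ => u t (x + s • EuclideanSpace.single i (1 : ℝ)))) 0)
          - (∫ y, ζ y * u t y) * u t x) t) ∧
    (∀ f : EuclideanSpace ℝ (Fin d) →ᵇ ℝ,
      Tendsto (fun t => ∫ x, f x * u t x) (𝓝[>] (0 : ℝ)) (𝓝 (f 0))) := by
  obtain rfl : p = heatKernel := by
    funext t x
    rw [hp, heatKernel, finrank_euclideanSpace_fin]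
  obtain rfl : b = heatAverage ζ := funext hb
  obtain rfl : a = totalMass ζ := funext ha
  obtain rfl : u = reactionDiffusion ζ := funext₂ hu
  have hζ : HasSubGaussianGrowth ζ := hasSubGaussianGrowth_of_abs_le_rpow hp0 fun y ↦
    (abs_of_nonneg (hζ0 y)).trans_le (hgrowth y)
  simpa only [EuclideanSpace.basisFun_apply] using
    stmt13_general (EuclideanSpace.basisFun (Fin d) ℝ) hζ0 hζc.aestronglyMeasurable hζ
end
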